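/- arXiv:1707.05206 — 9 statements merged into one kernel-verified Lean document; each statement's English description precedes it below -/
import Mathlib

section
/- For every real α with |α| < 1, ∫_0^∞ ₕe(-α x) e^{-x} dx = 1 + ∑_{s=1}^∞ (-1)^s α^s h_s, where both the integral and the series on the right-hand side converge. -/
open Real MeasureTheory

/-- The `n`-th harmonic number `h_n = ∑_{r=1}^n 1/r`. -/
noncomputable def harm (n : ℕ) : ℝ := ∑ r ∈ Finset.range n, 1 / (r + 1 : ℝ)

/-- The harmonic based exponential function `ₕe(x) = 1 + ∑_{n=1}^∞ h_n x^n / n!`. -/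
noncomputable def he (x : ℝ) : ℝ :=
  1 + ∑' n : ℕ, harm (n + 1) * x ^ (n + 1) / (Nat.factorial (n + 1) : ℝ)

theorem harm_nonneg (n : ℕ) : 0 ≤ harm n := by
  unfold harm
  exact Finset.sum_nonneg fun r _ => by positivity

theorem harm_le (n : ℕ) : harm n ≤ n := by
  unfold harm
  calc ∑ r ∈ Finset.range n, 1 / (r + 1 : ℝ) ≤ ∑ r ∈ Finset.range n, (1 : ℝ) := by
        refine Finset.sum_le_sum fun r _ => ?_
        rw [div_le_one (by positivity)]
        have : (0 : ℝ) ≤ r := Nat.cast_nonneg r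
        linarith
    _ = n := by simp

/-- The summand of the integrand. -/
noncomputable def heTerm (α : ℝ) (n : ℕ) (x : ℝ) : ℝ :=
  harm (n + 1) * (-α * x) ^ (n + 1) / (Nat.factorial (n + 1) : ℝ) * Real.exp (-x)

/-- The dominating summand. -/
noncomputable def heBound (α : ℝ) (n : ℕ) (x : ℝ) : ℝ :=
  (|α| * x) * Real.exp (-x) * ((|α| * x) ^ n / (Nat.factorial n : ℝ))

theorem heTerm_le (α : ℝ) (n : ℕ) (x : ℝ) (hx : 0 < x) : ‖heTerm α n x‖ ≤ heBound α n x := by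
  unfold heTerm heBound
  rw [Real.norm_eq_abs, abs_mul, abs_div, abs_mul, abs_pow, abs_mul, abs_neg, abs_of_pos hx,
    abs_of_pos (Real.exp_pos _), abs_of_nonneg (harm_nonneg _), Nat.abs_cast]
  have h := harm_le (n + 1)
  have e : (|α| * x) * Real.exp (-x) * ((|α| * x) ^ n / (Nat.factorial n : ℝ)) =
      ((n + 1 : ℕ) : ℝ) * (|α| * x) ^ (n + 1) / (Nat.factorial (n + 1) : ℝ) * Real.exp (-x) := by
    rw [Nat.factorial_succ]
    have h1 : (Nat.factorial n : ℝ) ≠ 0 := by positivity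
    have h2 : ((n : ℝ) + 1) ≠ 0 := by positivity
    push_cast
    field_simp
    ring
  rw [e]
  gcongr

theorem heBound_hasSum (α x : ℝ) :
    HasSum (fun n => heBound α n x) ((|α| * x) * Real.exp (-x) * Real.exp (|α| * x)) := by
  unfold heBound
  refine HasSum.mul_left _ ?_
  rw [Real.exp_eq_exp_ℝ]
  exact NormedSpace.expSeries_div_hasSum_exp (|α| * x)

theorem heBound_int (α : ℝ) (hα : |α| < 1) :
    IntegrableOn (fun x => (|α| * x) * Real.exp (-x) * Real.exp (|α| * x)) (Set.Ioi 0) := by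
  have h := (integrableOn_rpow_mul_exp_neg_mul_rpow (p := 1) (s := 1) (b := 1 - |α|)
    (by norm_num) one_pos (by linarith)).const_mul |α|
  refine IntegrableOn.congr_fun h (fun x _ => ?_) measurableSet_Ioi
  simp only [Real.rpow_one]
  rw [mul_assoc (|α| * x), ← Real.exp_add, mul_assoc]
  ring_nf

theorem heTerm_hasSum (α x : ℝ) (hx : 0 < x) :
    HasSum (fun n => heTerm α n x) ((he (-α * x) - 1) * Real.exp (-x)) := by
  have h : Summable (fun n => heTerm α n x) :=
    (heBound_hasSum α x).summable.of_norm_bounded (fun n => heTerm_le α n x hx)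
  convert h.hasSum using 1
  unfold heTerm he
  rw [tsum_mul_right]
  ring

theorem heTerm_meas (α : ℝ) (n : ℕ) : Measurable (heTerm α n) := by
  unfold heTerm
  fun_prop

theorem heTerm_integral (α : ℝ) (n : ℕ) :
    ∫ x in Set.Ioi (0 : ℝ), heTerm α n x = (-1 : ℝ) ^ (n + 1) * α ^ (n + 1) * harm (n + 1) := by
  have hG := Real.Gamma_eq_integral (s := ((n + 1 : ℕ) : ℝ) + 1) (by positivity)
  rw [Real.Gamma_nat_eq_factorial] at hG
  have e : ∫ x in Set.Ioi (0 : ℝ), heTerm α n x =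
      ∫ x in Set.Ioi (0 : ℝ), (harm (n + 1) * (-α) ^ (n + 1) / (Nat.factorial (n + 1) : ℝ)) *
        (Real.exp (-x) * x ^ (((n + 1 : ℕ) : ℝ) + 1 - 1)) := by
    refine setIntegral_congr_fun measurableSet_Ioi (fun x _ => ?_)
    simp only [heTerm, add_sub_cancel_right, Real.rpow_natCast, mul_pow]
    ring
  rw [e, integral_const_mul, ← hG, ← mul_pow, neg_one_mul]
  have h1 : (Nat.factorial (n + 1) : ℝ) ≠ 0 := by positivity
  field_simp

/-- For `|α| < 1`, `∫_0^∞ ₕe(-αx) e^{-x} dx = 1 + ∑_{s=1}^∞ (-1)^s α^s h_s`,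
with both the integral and the series converging. -/
theorem he_integral_geometric (α : ℝ) (hα : |α| < 1) :
    IntegrableOn (fun x : ℝ => he (-α * x) * Real.exp (-x)) (Set.Ioi 0) ∧
    Summable (fun s : ℕ => (-1 : ℝ) ^ (s + 1) * α ^ (s + 1) * harm (s + 1)) ∧
    (∫ x in Set.Ioi (0:ℝ), he (-α * x) * Real.exp (-x)) =
      1 + ∑' s : ℕ, (-1 : ℝ) ^ (s + 1) * α ^ (s + 1) * harm (s + 1) := by
  have hlim : ∀ᵐ x ∂(volume.restrict (Set.Ioi (0 : ℝ))),
      HasSum (fun n => heTerm α n x) ((he (-α * x) - 1) * Real.exp (-x)) :=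
    ae_restrict_of_forall_mem measurableSet_Ioi fun x hx => heTerm_hasSum α x hx
  have hb : ∀ n, ∀ᵐ x ∂(volume.restrict (Set.Ioi (0 : ℝ))), ‖heTerm α n x‖ ≤ heBound α n x :=
    fun n => ae_restrict_of_forall_mem measurableSet_Ioi fun x hx => heTerm_le α n x hx
  have key := hasSum_integral_of_dominated_convergence (heBound α)
    (fun n => (heTerm_meas α n).aestronglyMeasurable) hb
    (ae_of_all _ fun x => (heBound_hasSum α x).summable)
    (by
      simp only [(heBound_hasSum α _).tsum_eq]
      exact heBound_int α hα) hlim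
  simp only [heTerm_integral] at key
  have hI : IntegrableOn (fun x => (he (-α * x) - 1) * Real.exp (-x)) (Set.Ioi 0) := by
    refine Integrable.mono' (heBound_int α hα) ?_ ?_
    · refine aestronglyMeasurable_of_tendsto_ae Filter.atTop
        (f := fun N x => ∑ n ∈ Finset.range N, heTerm α n x) (fun N => ?_) ?_
      · exact (Finset.measurable_fun_sum _ fun n _ => heTerm_meas α n).aestronglyMeasurable
      · filter_upwards [hlim] with x hx using hx.tendsto_sum_nat
    · refine ae_restrict_of_forall_mem measurableSet_Ioi fun x hx => ?_
      rw [← (heTerm_hasSum α x hx).tsum_eq]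
      exact tsum_of_norm_bounded (heBound_hasSum α x) fun n => heTerm_le α n x hx
  have hE : IntegrableOn (fun x : ℝ => Real.exp (-x)) (Set.Ioi 0) := integrableOn_exp_neg_Ioi 0
  have hsplit : (fun x : ℝ => he (-α * x) * Real.exp (-x)) =
      fun x => Real.exp (-x) + (he (-α * x) - 1) * Real.exp (-x) := by
    funext x
    ring
  refine ⟨?_, key.summable, ?_⟩
  · rw [hsplit]
    exact hE.add hI
  · rw [hsplit, integral_add hE hI, integral_exp_neg_Ioi_zero, key.tsum_eq]
end

section
/- For every real α, ∫_{-∞}^{∞} ₍√h₎e(α x) e^{-x²} dx = √π · ₕe(α²/4), i.e. ∫_{-∞}^{∞} (1 + ∑_{n=1}^∞ h_{n/2} (α x)^n / n!) e^{-x²} dx = √π (1 + ∑_{n=1}^∞ h_n (α²/4)^n / n!). -/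
open Real MeasureTheory

/-- The fractional harmonic number `h_ν = ∫_0^1 (1 - t^ν)/(1 - t) dt` for real `ν`. -/
noncomputable def harmF (ν : ℝ) : ℝ := ∫ t in (0:ℝ)..1, (1 - t ^ ν) / (1 - t)

/-- The square-root analogue `₍√h₎e(x) = 1 + ∑_{n=1}^∞ h_{n/2} x^n / n!`. -/
noncomputable def sqhe (x : ℝ) : ℝ :=
  1 + ∑' n : ℕ, harmF ((n + 1 : ℝ) / 2) * x ^ (n + 1) / (Nat.factorial (n + 1) : ℝ)

lemma harmF_nat (n : ℕ) : harmF (n : ℝ) = harm n := by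
  unfold harmF harm
  have h : (∫ t in (0:ℝ)..1, (1 - t ^ (n:ℝ)) / (1 - t))
      = ∫ t in (0:ℝ)..1, ∑ i ∈ Finset.range n, t ^ i := by
    apply intervalIntegral.integral_congr_ae
    have h1 : ∀ᵐ t : ℝ, t ≠ 1 := by
      simp [ae_iff]
    filter_upwards [h1] with t ht _
    rw [Real.rpow_natCast, geom_sum_eq ht, ← neg_div_neg_eq]
    congr 1 <;> ring
  rw [h, intervalIntegral.integral_finsetSum]
  · apply Finset.sum_congr rfl
    intro i _
    rw [integral_pow]
    simp
  · intro i _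
    exact (continuous_pow i).intervalIntegrable _ _

lemma harmF_bound (n : ℕ) : |harmF ((n + 1 : ℝ) / 2)| ≤ n + 1 := by
  unfold harmF
  have := intervalIntegral.norm_integral_le_of_norm_le_const_ae (a := (0:ℝ)) (b := 1)
    (f := fun t : ℝ => (1 - t ^ ((n + 1 : ℝ) / 2)) / (1 - t)) (C := n + 1) ?_
  · simpa using this
  · have h1 : ∀ᵐ t : ℝ, t ≠ 1 := by
      simp [ae_iff]
    filter_upwards [h1] with t ht1 ht
    rw [Set.uIoc_of_le zero_le_one] at ht
    obtain ⟨h0, hle⟩ := ht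
    have hlt : t < 1 := lt_of_le_of_ne hle ht1
    have hp : t ^ ((n + 1 : ℝ) / 2) ≤ 1 :=
      Real.rpow_le_one h0.le hle (by positivity)
    have hq : t ^ (n + 1) ≤ t ^ ((n + 1 : ℝ) / 2) := by
      rw [← Real.rpow_natCast]
      apply Real.rpow_le_rpow_of_exponent_ge h0 hle
      push_cast
      have : (0:ℝ) ≤ n := Nat.cast_nonneg n
      linarith
    have hb := one_add_mul_le_pow (a := t - 1) (by linarith) (n + 1)
    rw [show 1 + (t - 1) = t by ring] at hb
    push_cast at hb
    rw [Real.norm_eq_abs, abs_of_nonneg (div_nonneg (by linarith) (by linarith)),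
      div_le_iff₀ (by linarith)]
    nlinarith

lemma gamma_half (m : ℕ) : Real.Gamma (m + 1 / 2)
    = √π * (Nat.factorial (2 * m) : ℝ) / (4 ^ m * (Nat.factorial m : ℝ)) := by
  induction m with
  | zero => simp [-one_div, Real.Gamma_one_half_eq]
  | succ k ih =>
    have : ((k + 1 : ℕ) : ℝ) + 1 / 2 = (k + 1 / 2 : ℝ) + 1 := by push_cast; ring
    rw [this, Real.Gamma_add_one (by positivity), ih, show 2 * (k + 1) = 2 * k + 1 + 1 by ring,
      Nat.factorial_succ, Nat.factorial_succ, Nat.factorial_succ]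
    have := Nat.factorial_pos k
    push_cast
    field_simp
    ring

lemma moment_even (m : ℕ) : (∫ x : ℝ, x ^ (2 * m) * Real.exp (-x ^ 2))
    = √π * (Nat.factorial (2 * m) : ℝ) / (4 ^ m * (Nat.factorial m : ℝ)) := by
  have h := integral_comp_abs (f := fun x : ℝ => x ^ (2 * m) * Real.exp (-x ^ 2))
  simp only [sq_abs, pow_mul] at h
  simp only [pow_mul]
  rw [h]
  have h2 := integral_rpow_mul_exp_neg_rpow (p := 2) (q := 2 * m) (by norm_num)
    (by have : (0:ℝ) ≤ m := Nat.cast_nonneg m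
        linarith)
  have h3 : (∫ x in Set.Ioi (0:ℝ), (x ^ 2) ^ m * Real.exp (-x ^ 2))
      = ∫ x in Set.Ioi (0:ℝ), x ^ (2 * m : ℝ) * Real.exp (-x ^ (2:ℝ)) := by
    apply setIntegral_congr_fun measurableSet_Ioi
    intro x _
    simp only
    rw [← pow_mul, ← Real.rpow_natCast x (2 * m), ← Real.rpow_natCast x 2]
    push_cast
    rfl
  rw [h3, h2, ← gamma_half, show (2 * (m:ℝ) + 1) / 2 = m + 1 / 2 by ring]
  ring

lemma moment_odd (m : ℕ) : (∫ x : ℝ, x ^ (2 * m + 1) * Real.exp (-x ^ 2)) = 0 := by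
  have h := integral_neg_eq_self (fun x : ℝ => x ^ (2 * m + 1) * Real.exp (-x ^ 2)) volume
  have h2 : ∀ x : ℝ, (-x) ^ (2 * m + 1) * Real.exp (-(-x) ^ 2)
      = -(x ^ (2 * m + 1) * Real.exp (-x ^ 2)) := by
    intro x
    rw [Odd.neg_pow ⟨m, rfl⟩, neg_sq]
    ring
  simp only [h2] at h
  rw [integral_neg] at h
  linarith

lemma summ_bound (y : ℝ) : HasSum (fun n : ℕ => y ^ (n + 1) / (Nat.factorial n : ℝ))
    (y * Real.exp y) := by
  have h := (NormedSpace.expSeries_div_hasSum_exp (𝔸 := ℝ) y).mul_left y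
  rw [← Real.exp_eq_exp_ℝ] at h
  refine h.congr_fun ?_
  intro n
  ring

lemma term_bound (n : ℕ) (y : ℝ) :
    |harmF ((n + 1 : ℝ) / 2) * y ^ (n + 1) / (Nat.factorial (n + 1) : ℝ)|
      ≤ |y| ^ (n + 1) / (Nat.factorial n : ℝ) := by
  rw [abs_div, abs_mul, abs_pow, Nat.abs_cast, Nat.factorial_succ]
  have := Nat.factorial_pos n
  have h : |harmF ((n + 1 : ℝ) / 2)| * |y| ^ (n + 1) ≤ (n + 1) * |y| ^ (n + 1) :=
    mul_le_mul_of_nonneg_right (harmF_bound n) (by positivity)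
  push_cast
  calc _ ≤ (n + 1) * |y| ^ (n + 1) / ((n + 1) * (Nat.factorial n : ℝ)) := by gcongr
    _ = _ := by field_simp

lemma summ_term (y : ℝ) : Summable fun n : ℕ =>
    harmF ((n + 1 : ℝ) / 2) * y ^ (n + 1) / (Nat.factorial (n + 1) : ℝ) :=
  Summable.of_norm_bounded (summ_bound |y|).summable (fun n => term_bound n y)

lemma integrable_gauss : Integrable fun x : ℝ => Real.exp (-x ^ 2) := by
  simpa using integrable_exp_neg_mul_sq (b := 1) one_pos

lemma integrable_bound (α : ℝ) :
    Integrable fun x : ℝ => |α * x| * Real.exp |α * x| * Real.exp (-x ^ 2) := by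
  have h := (integrable_exp_neg_mul_sq (b := 1 / 2) (by norm_num)).const_mul
    (Real.exp (2 * α ^ 2))
  refine h.mono' (by fun_prop) ?_
  filter_upwards with x
  rw [Real.norm_eq_abs, abs_of_nonneg (by positivity), ← Real.exp_add]
  have h1 : |α * x| ≤ Real.exp |α * x| := by
    have := Real.add_one_le_exp |α * x|
    linarith
  calc _ ≤ Real.exp |α * x| * Real.exp |α * x| * Real.exp (-x ^ 2) := by gcongr
    _ = Real.exp (|α * x| + |α * x| + -x ^ 2) := by rw [Real.exp_add, Real.exp_add]
    _ ≤ _ := by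
      apply Real.exp_le_exp.mpr
      rw [abs_mul, ← sq_abs α, ← sq_abs x]
      nlinarith [sq_nonneg (2 * |α| - |x|)]

/-- `∫_{-∞}^{∞} ₍√h₎e(αx) e^{-x²} dx = √π · ₕe(α²/4)`. -/
theorem sqhe_gaussian_integral (α : ℝ) :
    (∫ x : ℝ, sqhe (α * x) * Real.exp (-x ^ 2)) = Real.sqrt π * he (α ^ 2 / 4) := by
  set F : ℕ → ℝ → ℝ := fun n x =>
    harmF ((n + 1 : ℝ) / 2) * (α * x) ^ (n + 1) / (Nat.factorial (n + 1) : ℝ)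
      * Real.exp (-x ^ 2) with hF
  set S : ℝ → ℝ := fun x => (∑' n : ℕ,
    harmF ((n + 1 : ℝ) / 2) * (α * x) ^ (n + 1) / (Nat.factorial (n + 1) : ℝ))
      * Real.exp (-x ^ 2) with hS
  have hFm : ∀ n, AEStronglyMeasurable (F n) volume := fun n => by
    apply Continuous.aestronglyMeasurable
    simp only [hF]
    fun_prop
  have hFS : ∀ x, HasSum (fun n => F n x) (S x) := fun x =>
    (summ_term (α * x)).hasSum.mul_right _
  have hBsum : ∀ x : ℝ, HasSum (fun n : ℕ => |α * x| ^ (n + 1) / (Nat.factorial n : ℝ)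
      * Real.exp (-x ^ 2)) (|α * x| * Real.exp |α * x| * Real.exp (-x ^ 2)) := fun x =>
    (summ_bound |α * x|).mul_right _
  have hFB : ∀ n x, ‖F n x‖ ≤ |α * x| ^ (n + 1) / (Nat.factorial n : ℝ)
      * Real.exp (-x ^ 2) := fun n x => by
    simp only [hF]
    rw [norm_mul, Real.norm_eq_abs, Real.norm_eq_abs, Real.abs_exp]
    exact mul_le_mul_of_nonneg_right (term_bound n _) (Real.exp_pos _).le
  have hmain := hasSum_integral_of_dominated_convergence (μ := volume) (F := F) (f := S)
    (fun (n : ℕ) (x : ℝ) => |α * x| ^ (n + 1) / (Nat.factorial n : ℝ) * Real.exp (-x ^ 2))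
    hFm (fun n => Filter.Eventually.of_forall (hFB n))
    (Filter.Eventually.of_forall fun x => (hBsum x).summable)
    ((integrable_bound α).congr (Filter.Eventually.of_forall fun x => (hBsum x).tsum_eq.symm))
    (Filter.Eventually.of_forall hFS)
  have hSint : Integrable S := by
    refine (integrable_bound α).mono' ?_ ?_
    · apply aestronglyMeasurable_of_tendsto_ae Filter.atTop
        (f := fun (N : ℕ) (x : ℝ) => ∑ n ∈ Finset.range N, F n x)
      · intro N
        exact Finset.aestronglyMeasurable_fun_sum _ (fun n _ => hFm n)
      · exact Filter.Eventually.of_forall fun x => (hFS x).tendsto_sum_nat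
    · refine Filter.Eventually.of_forall fun x => ?_
      rw [← (hFS x).tsum_eq]
      exact tsum_of_norm_bounded (hBsum x) (fun n => hFB n x)
  have hsplit : (∫ x : ℝ, sqhe (α * x) * Real.exp (-x ^ 2)) = √π + ∫ x, S x := by
    have hg : (∫ x : ℝ, Real.exp (-x ^ 2)) = √π := by
      simpa using integral_gaussian 1
    rw [← hg, ← integral_add integrable_gauss hSint]
    congr 1
    ext x
    simp only [sqhe, hS]
    ring
  have hInt : ∀ n, (∫ x, F n x) = harmF ((n + 1 : ℝ) / 2) * α ^ (n + 1)
      / (Nat.factorial (n + 1) : ℝ) * ∫ x : ℝ, x ^ (n + 1) * Real.exp (-x ^ 2) := by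
    intro n
    rw [← integral_const_mul]
    congr 1
    ext x
    simp only [hF]
    ring
  rw [hsplit, ← hmain.tsum_eq, he, mul_add, mul_one, ← tsum_mul_left]
  congr 1
  have hinj : Function.Injective (fun m : ℕ => 2 * m + 1) := fun a b h => by
    simp only at h
    omega
  rw [← hinj.tsum_eq]
  · apply tsum_congr
    intro m
    rw [hInt, show 2 * m + 1 + 1 = 2 * (m + 1) by ring, moment_even]
    have : (((2 * m + 1 : ℕ) : ℝ) + 1) / 2 = ((m + 1 : ℕ) : ℝ) := by push_cast; ring
    rw [this, harmF_nat, div_pow, pow_mul α]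
    have := Nat.factorial_pos (2 * (m + 1))
    have := Nat.factorial_pos (m + 1)
    field_simp
  · intro n hn
    by_contra hcon
    apply hn
    obtain ⟨k, hk⟩ | ⟨k, hk⟩ := Nat.even_or_odd n
    · subst hk
      beta_reduce
      rw [hInt, show k + k + 1 = 2 * k + 1 by ring, moment_odd, mul_zero]
    · exact absurd ⟨k, hk.symm⟩ hcon
end

section
/- For every real x > 0, ₍√h₎e(-x) = ∫_0^∞ ₕe(-η x²) g_{1/2}(η) dη, where g_{1/2}(η) = (1/(2√(π η³))) e^{-1/(4η)}. -/
open Real MeasureTheory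

open Filter Topology Set in
lemma ftc_aux (f f' : ℝ → ℝ) (m l : ℝ) (hd : ∀ x ∈ Ioi (0:ℝ), HasDerivAt f (f' x) x)
    (hp : ∀ x ∈ Ioi (0:ℝ), 0 ≤ f' x) (h0 : Tendsto f (𝓝[>] 0) (𝓝 m))
    (h1 : Tendsto f atTop (𝓝 l)) :
    IntegrableOn f' (Ioi 0) ∧ ∫ x in Ioi (0:ℝ), f' x = l - m := by
  set F := Function.update f 0 m with hF
  have hc : ContinuousWithinAt F (Ici 0) 0 := by
    rw [continuousWithinAt_update_same]
    simpa [Ici_sdiff_left] using h0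
  have hd' : ∀ x ∈ Ioi (0:ℝ), HasDerivAt F (f' x) x := by
    intro x hx
    refine (hd x hx).congr_of_eventuallyEq ?_
    filter_upwards [Ioi_mem_nhds hx] with y hy
    exact Function.update_of_ne (ne_of_gt hy) _ _
  have hl : Tendsto F atTop (𝓝 l) := by
    refine h1.congr' ?_
    filter_upwards [eventually_gt_atTop 0] with y hy
    exact (Function.update_of_ne (ne_of_gt hy) _ _).symm
  refine ⟨integrableOn_Ioi_deriv_of_nonneg hc hd' hp hl, ?_⟩
  rw [integral_Ioi_of_hasDerivAt_of_nonneg hc hd' hp hl]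
  simp [hF]

noncomputable def EE (v : ℝ) : ℝ := ∫ w in (0:ℝ)..v, Real.exp (-w ^ 2)

lemma EE_deriv (v : ℝ) : HasDerivAt EE (Real.exp (-v ^ 2)) v := by
  have hc : Continuous (fun w : ℝ => Real.exp (-w ^ 2)) := by fun_prop
  exact intervalIntegral.integral_hasDerivAt_right (hc.intervalIntegrable _ _)
    (hc.stronglyMeasurableAtFilter _ _) hc.continuousAt

lemma EE_neg (v : ℝ) : EE (-v) = - EE v := by
  unfold EE
  have := intervalIntegral.integral_comp_neg (a := 0) (b := v) (fun w : ℝ => Real.exp (-w ^ 2))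
  simp only [neg_sq, neg_zero] at this
  rw [this, intervalIntegral.integral_symm]

open Filter Topology Set in
lemma EE_top : Tendsto EE atTop (𝓝 (√π / 2)) := by
  have h := integral_gaussian_Ioi 1
  simp only [neg_mul, one_mul, div_one] at h
  rw [← h]
  refine intervalIntegral_tendsto_integral_Ioi 0 ?_ tendsto_id
  have := (integrable_exp_neg_mul_sq (b := 1) one_pos).integrableOn (s := Ioi 0)
  simpa using this

open Filter Topology Set in
lemma EE_bot : Tendsto EE atBot (𝓝 (-(√π / 2))) := by
  have h := (EE_top.comp tendsto_neg_atBot_atTop).neg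
  refine h.congr fun v => ?_
  simp [EE_neg]

noncomputable def gg (η : ℝ) : ℝ := 1 / (2 * Real.sqrt (π * η ^ 3)) * Real.exp (-1 / (4 * η))

lemma gg_nonneg (η : ℝ) : 0 ≤ gg η := by unfold gg; positivity

noncomputable def PP (r η : ℝ) : ℝ :=
  -(1 / √π) * (Real.exp (-r) * EE (1 / (2 * √η) - r * √η)
    + Real.exp r * EE (1 / (2 * √η) + r * √η))

lemma PP_deriv (r η : ℝ) (hη : 0 < η) :
    HasDerivAt (PP r) (gg η * Real.exp (-η * r ^ 2)) η := by
  have hs : HasDerivAt (fun y : ℝ => √y) (1 / (2 * √η)) η := Real.hasDerivAt_sqrt hη.ne'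
  have hq : 0 < √η := Real.sqrt_pos.2 hη
  have hpi : 0 < √π := Real.sqrt_pos.2 Real.pi_pos
  have h1 : HasDerivAt (fun y : ℝ => 1 / (2 * √y)) (-(1 / (4 * η * √η))) η := by
    have := ((hs.const_mul 2).inv (by positivity))
    simp only [one_div]
    convert! this using 1
    field_simp
    rw [Real.sq_sqrt hη.le]
    ring
  have hm := (EE_deriv _).comp η (h1.sub (hs.const_mul r))
  have hp := (EE_deriv _).comp η (h1.add (hs.const_mul r))
  have := ((hm.const_mul (Real.exp (-r))).add (hp.const_mul (Real.exp r))).const_mul (-(1 / √π))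
  convert! this using 1
  have e1 : Real.exp (-(1 / (2 * √η) - r * √η) ^ 2)
      = Real.exp (-1 / (4 * η)) * Real.exp (-η * r ^ 2) * Real.exp r := by
    rw [← Real.exp_add, ← Real.exp_add]
    congr 1
    have := Real.sq_sqrt hη.le
    generalize √η = q at *
    subst this
    field_simp
    ring
  have e2 : Real.exp (-(1 / (2 * √η) + r * √η) ^ 2)
      = Real.exp (-1 / (4 * η)) * Real.exp (-η * r ^ 2) * Real.exp (-r) := by
    rw [← Real.exp_add, ← Real.exp_add]
    congr 1
    have := Real.sq_sqrt hη.le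
    generalize √η = q at *
    subst this
    field_simp
    ring
  have e3 : √(π * η ^ 3) = √π * (η * √η) := by
    rw [Real.sqrt_mul Real.pi_pos.le]
    congr 1
    rw [show η ^ 3 = η ^ 2 * η by ring, Real.sqrt_mul (by positivity), Real.sqrt_sq hη.le]
  have e4 : Real.exp (-r) * Real.exp r = 1 := by rw [← Real.exp_add]; simp
  simp only [Pi.sub_apply, Pi.add_apply]
  rw [e1, e2, gg, e3]
  generalize Real.exp (-1 / (4 * η)) = A
  generalize Real.exp (-η * r ^ 2) = B
  have : ∀ c d a b : ℝ, c * d = 1 → -(1 / √π) * (c * (A * B * d * (a - b)) + d * (A * B * c * (a + b)))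
      = -(1 / √π) * (A * B * (2 * a)) := by
    intro c d a b h
    linear_combination (-(1 / √π) * (A * B * (2 * a))) * h
  rw [this _ _ _ _ e4]
  field_simp
  ring

open Filter Topology Set in
lemma levy (r : ℝ) (hr : 0 ≤ r) :
    IntegrableOn (fun η => gg η * Real.exp (-η * r ^ 2)) (Ioi 0) ∧
    ∫ η in Ioi (0:ℝ), gg η * Real.exp (-η * r ^ 2) = Real.exp (-r) := by
  have hpi : 0 < √π := Real.sqrt_pos.2 Real.pi_pos
  have hs0 : Tendsto (fun y : ℝ => √y) (𝓝[>] 0) (𝓝[>] 0) := by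
    refine tendsto_nhdsWithin_iff.2 ⟨?_, ?_⟩
    · have := Real.continuous_sqrt.tendsto 0
      rw [Real.sqrt_zero] at this
      exact this.mono_left nhdsWithin_le_nhds
    · filter_upwards [self_mem_nhdsWithin] with y hy
      exact Real.sqrt_pos.2 hy
  have hi0 : Tendsto (fun y : ℝ => 1 / (2 * √y)) (𝓝[>] 0) atTop := by
    have := (tendsto_inv_nhdsGT_zero.comp hs0).const_mul_atTop (r := 1/2) (by norm_num)
    refine this.congr fun y => ?_
    simp; ring
  have hr0 : Tendsto (fun y : ℝ => r * √y) (𝓝[>] 0) (𝓝 0) := by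
    simpa using (hs0.mono_right nhdsWithin_le_nhds).const_mul r
  have hst : Tendsto (fun y : ℝ => √y) atTop atTop := Real.tendsto_sqrt_atTop
  have hit : Tendsto (fun y : ℝ => 1 / (2 * √y)) atTop (𝓝 0) := by
    have := (tendsto_inv_atTop_zero.comp hst).const_mul (1/2)
    rw [mul_zero] at this
    refine this.congr fun y => ?_
    simp; ring
  have L0 : Tendsto (PP r) (𝓝[>] 0)
      (𝓝 (-(1 / √π) * (Real.exp (-r) * (√π / 2) + Real.exp r * (√π / 2)))) := by
    refine Tendsto.const_mul _ (Tendsto.add (Tendsto.const_mul _ ?_) (Tendsto.const_mul _ ?_))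
    · refine EE_top.comp ?_
      simpa [sub_eq_add_neg] using hi0.atTop_add hr0.neg
    · exact EE_top.comp (hi0.atTop_add hr0)
  rcases hr.eq_or_lt with rfl | hr
  · have Lt : Tendsto (PP 0) atTop (𝓝 (-(1 / √π) * (Real.exp (-0) * EE 0 + Real.exp 0 * EE 0))) := by
      have hE : Tendsto (fun y : ℝ => EE (1 / (2 * √y))) atTop (𝓝 (EE 0)) :=
        ((EE_deriv 0).continuousAt.tendsto).comp hit
      unfold PP
      simp only [zero_mul, sub_zero, add_zero]
      exact Tendsto.const_mul _ (Tendsto.add (Tendsto.const_mul _ hE) (Tendsto.const_mul _ hE))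
    have := ftc_aux (PP 0) _ _ _ (fun x hx => PP_deriv 0 x hx)
      (fun x _ => mul_nonneg (gg_nonneg x) (Real.exp_pos _).le) L0 Lt
    refine ⟨this.1, this.2.trans ?_⟩
    have : EE 0 = 0 := by simp [EE]
    rw [this]
    simp
    field_simp
  · have Lt : Tendsto (PP r) atTop
        (𝓝 (-(1 / √π) * (Real.exp (-r) * (-(√π / 2)) + Real.exp r * (√π / 2)))) := by
      have hrt : Tendsto (fun y : ℝ => r * √y) atTop atTop := hst.const_mul_atTop hr
      refine Tendsto.const_mul _ (Tendsto.add (Tendsto.const_mul _ ?_) (Tendsto.const_mul _ ?_))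
      · refine EE_bot.comp ?_
        simpa [sub_eq_add_neg] using hit.add_atBot (tendsto_neg_atTop_atBot.comp hrt)
      · exact EE_top.comp (hit.add_atTop hrt)
    have := ftc_aux (PP r) _ _ _ (fun x hx => PP_deriv r x hx)
      (fun x _ => mul_nonneg (gg_nonneg x) (Real.exp_pos _).le) L0 Lt
    refine ⟨this.1, this.2.trans ?_⟩
    field_simp
    ring

open Set in
lemma kern_bound (p : ℝ) (hp : 0 < p) (hp1 : p ≤ 1) (n : ℕ) (t : ℝ) (ht : t ∈ Ioo (0:ℝ) 1) :
    0 ≤ (1 - t ^ (p * (n + 1 : ℝ))) / (1 - t) ∧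
    (1 - t ^ (p * (n + 1 : ℝ))) / (1 - t) ≤ n + 1 := by
  obtain ⟨h0, h1⟩ := ht
  have hpos : 0 < 1 - t := by linarith
  have hle : t ^ (p * (n + 1 : ℝ)) ≤ 1 := Real.rpow_le_one h0.le h1.le (by positivity)
  refine ⟨div_nonneg (by linarith) hpos.le, ?_⟩
  rw [div_le_iff₀ hpos]
  have h2 : t ^ (n + 1) ≤ t ^ (p * (n + 1 : ℝ)) := by
    rw [← Real.rpow_natCast]
    apply Real.rpow_le_rpow_of_exponent_ge h0 h1.le
    push_cast
    nlinarith [(Nat.cast_nonneg n : (0:ℝ) ≤ n)]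
  have h3 := one_add_mul_le_pow (a := t - 1) (by linarith) (n + 1)
  push_cast at h3
  rw [show (1 : ℝ) + (t - 1) = t by ring] at h3
  linarith

open Set in
lemma series_int (p : ℝ) (hp : 0 < p) (hp1 : p ≤ 1) (y : ℝ) :
    ∑' n : ℕ, harmF (p * (n + 1 : ℝ)) * y ^ (n + 1) / (Nat.factorial (n + 1) : ℝ)
      = ∫ t in Ioo (0:ℝ) 1, (Real.exp y - Real.exp (t ^ p * y)) / (1 - t) := by
  set F : ℕ → ℝ → ℝ := fun n t =>
    (1 - t ^ (p * (n + 1 : ℝ))) / (1 - t) * (y ^ (n + 1) / (Nat.factorial (n + 1) : ℝ)) with hF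
  have hmeas : ∀ n, Measurable (F n) := fun n => by
    simp only [hF]
    fun_prop
  have hb : ∀ n, ∀ t ∈ Ioo (0:ℝ) 1, ‖F n t‖ ≤ |y| * (|y| ^ n / (Nat.factorial n : ℝ)) := by
    intro n t ht
    obtain ⟨h1, h2⟩ := kern_bound p hp hp1 n t ht
    simp only [hF, norm_mul, Real.norm_eq_abs, abs_of_nonneg h1, abs_div, abs_pow, Nat.abs_cast]
    calc _ ≤ ((n:ℝ) + 1) * (|y| ^ (n + 1) / (Nat.factorial (n + 1) : ℝ)) := by gcongr
      _ = _ := by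
        rw [Nat.factorial_succ]; push_cast; field_simp; ring
  have hint : ∀ n, Integrable (F n) (volume.restrict (Ioo 0 1)) := fun n =>
    Measure.integrableOn_of_bounded (M := |y| * (|y| ^ n / (Nat.factorial n : ℝ))) (by simp)
      (hmeas n).aestronglyMeasurable
      ((ae_restrict_iff' measurableSet_Ioo).2 (Filter.Eventually.of_forall (hb n)))
  have hsum : Summable fun n => ∫ t in Ioo (0:ℝ) 1, ‖F n t‖ := by
    refine Summable.of_nonneg_of_le (fun n => integral_nonneg fun t => norm_nonneg _) (fun n => ?_)
      ((Real.summable_pow_div_factorial |y|).mul_left |y|)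
    calc _ ≤ ∫ t in Ioo (0:ℝ) 1, |y| * (|y| ^ n / (Nat.factorial n : ℝ)) :=
          setIntegral_mono_on (hint n).norm (integrable_const _) measurableSet_Ioo (hb n)
      _ = _ := by simp
  have hs := (hasSum_integral_of_summable_integral_norm hint hsum).tsum_eq
  have e1 : ∀ n : ℕ, harmF (p * (n + 1 : ℝ)) * y ^ (n + 1) / (Nat.factorial (n + 1) : ℝ)
      = ∫ t in Ioo (0:ℝ) 1, F n t := by
    intro n
    simp only [hF, integral_mul_const, harmF]
    rw [intervalIntegral.integral_of_le zero_le_one, integral_Ioc_eq_integral_Ioo, mul_div_assoc]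
  simp_rw [e1]
  rw [hs]
  refine setIntegral_congr_fun measurableSet_Ioo fun t ht => ?_
  have hexp : ∀ z : ℝ, HasSum (fun n : ℕ => z ^ (n + 1) / (Nat.factorial (n + 1) : ℝ))
      (Real.exp z - 1) := by
    intro z
    have h := NormedSpace.expSeries_div_hasSum_exp z
    rw [← Real.exp_eq_exp_ℝ] at h
    have := (hasSum_nat_add_iff' 1).2 h
    simpa using this
  have h := (((hexp y).sub (hexp (t ^ p * y))).div_const (1 - t)).tsum_eq
  rw [sub_sub_sub_cancel_right] at h
  rw [← h]
  refine tsum_congr fun n => ?_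
  simp only [hF]
  rw [Real.rpow_mul ht.1.le, mul_pow, ← Real.rpow_natCast (t ^ p)]
  push_cast
  ring

open Set in
lemma harm_eq (n : ℕ) : harm n = harmF n := by
  unfold harm harmF
  rw [intervalIntegral.integral_of_le zero_le_one, integral_Ioc_eq_integral_Ioo]
  have : ∫ t in Ioo (0:ℝ) 1, (1 - t ^ (n:ℝ)) / (1 - t)
      = ∫ t in Ioo (0:ℝ) 1, ∑ r ∈ Finset.range n, t ^ r := by
    refine setIntegral_congr_fun measurableSet_Ioo fun t ht => ?_
    have h1 : t ≠ 1 := ht.2.ne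
    simp only [Real.rpow_natCast]
    rw [geom_sum_eq h1, ← neg_sub, ← neg_sub t 1, neg_div_neg_eq]
  rw [this, ← integral_Ioc_eq_integral_Ioo, ← intervalIntegral.integral_of_le zero_le_one,
    intervalIntegral.integral_finsetSum]
  · simp
  · intro i _
    exact (continuous_pow i).intervalIntegrable _ _

open Set in
lemma he_eq (y : ℝ) : he y = 1 + ∫ t in Ioo (0:ℝ) 1, (Real.exp y - Real.exp (t * y)) / (1 - t) := by
  have h := series_int 1 one_pos le_rfl y
  simp only [one_mul, Real.rpow_one] at h
  rw [← h, he]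
  simp only [harm_eq]
  push_cast
  rfl

open Set in
lemma sqhe_eq (y : ℝ) :
    sqhe y = 1 + ∫ t in Ioo (0:ℝ) 1, (Real.exp y - Real.exp (√t * y)) / (1 - t) := by
  have h := series_int (1/2) (by norm_num) (by norm_num) y
  simp only [← Real.sqrt_eq_rpow] at h
  rw [← h, sqhe]
  congr 2
  ext n
  congr 3
  ring

open Set in
theorem sqhe_levy_aux (x : ℝ) (hx : 0 < x) :
    sqhe (-x) = ∫ η in Set.Ioi (0:ℝ),
      he (-η * x ^ 2) * (1 / (2 * Real.sqrt (π * η ^ 3)) * Real.exp (-1 / (4 * η))) := by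
  set K : ℝ → ℝ → ℝ := fun η t =>
    (gg η * Real.exp (-η * x ^ 2) - gg η * Real.exp (-η * (√t * x) ^ 2)) / (1 - t) with hK
  have hg0 := levy 0 le_rfl
  simp only [ne_eq, OfNat.ofNat_ne_zero, not_false_eq_true, zero_pow, mul_zero, Real.exp_zero,
    mul_one, neg_zero] at hg0
  have hx1 := levy x hx.le
  have hxt := fun t : ℝ => levy (√t * x) (by positivity)
  have hin : ∀ t, ∫ η in Ioi (0:ℝ), K η t = (Real.exp (-x) - Real.exp (√t * (-x))) / (1 - t) := by
    intro t
    simp only [hK]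
    rw [integral_div, integral_sub hx1.1 (hxt t).1, hx1.2, (hxt t).2, mul_neg]
  have hKint : ∀ t, Integrable (fun η => K η t) (volume.restrict (Ioi 0)) := fun t =>
    (hx1.1.sub (hxt t).1).div_const _
  have hKneg : ∀ η ∈ Ioi (0:ℝ), ∀ t ∈ Ioo (0:ℝ) 1, K η t ≤ 0 := by
    intro η hη t ht
    have hη : 0 < η := hη
    have : √t ^ 2 = t := Real.sq_sqrt ht.1.le
    refine div_nonpos_of_nonpos_of_nonneg ?_ (by linarith [ht.2])
    rw [← mul_sub]
    refine mul_nonpos_of_nonneg_of_nonpos (gg_nonneg η) (sub_nonpos.2 (Real.exp_le_exp.2 ?_))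
    rw [mul_pow, this, neg_mul, neg_mul, neg_le_neg_iff]
    have : t * x ^ 2 ≤ x ^ 2 := by nlinarith [ht.2, sq_nonneg x]
    gcongr
  have hmeas : Measurable (Function.uncurry K) := by
    simp only [hK, gg, Function.uncurry_def]
    fun_prop
  have hnorm : ∀ t ∈ Ioo (0:ℝ) 1, ∫ η in Ioi (0:ℝ), ‖K η t‖
      = -((Real.exp (-x) - Real.exp (√t * (-x))) / (1 - t)) := by
    intro t ht
    rw [← hin t, ← integral_neg]
    refine setIntegral_congr_fun measurableSet_Ioi fun η hη => ?_
    exact abs_of_nonpos (hKneg η hη t ht)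
  have hbd : ∀ t ∈ Ioo (0:ℝ) 1, ‖∫ η in Ioi (0:ℝ), ‖K η t‖‖ ≤ x := by
    intro t ht
    rw [Real.norm_eq_abs, abs_of_nonneg (integral_nonneg fun _ => norm_nonneg _), hnorm t ht,
      ← neg_div, div_le_iff₀ (by linarith [ht.2])]
    have hq : √t ^ 2 = t := Real.sq_sqrt ht.1.le
    have hq0 : 0 ≤ √t := Real.sqrt_nonneg t
    have hq1 : √t ≤ 1 := Real.sqrt_le_one.2 ht.2.le
    have h1 : Real.exp (√t * (-x)) ≤ 1 := Real.exp_le_one_iff.2 (by nlinarith)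
    have h2 : 1 - x * (1 - √t) ≤ Real.exp (-(x * (1 - √t))) := by
      have := Real.add_one_le_exp (-(x * (1 - √t)))
      linarith
    have h3 : Real.exp (-x) = Real.exp (√t * (-x)) * Real.exp (-(x * (1 - √t))) := by
      rw [← Real.exp_add]; congr 1; ring
    have h4 : 0 ≤ x * (1 - √t) := mul_nonneg hx.le (by linarith)
    have h5 : x * (1 - √t) ≤ x * (1 - t) := by
      apply mul_le_mul_of_nonneg_left _ hx.le
      nlinarith
    rw [h3]
    have h0 := Real.exp_pos (√t * (-x))
    nlinarith
  have hprod : Integrable (Function.uncurry K)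
      ((volume.restrict (Ioi (0:ℝ))).prod (volume.restrict (Ioo (0:ℝ) 1))) := by
    rw [integrable_prod_iff' hmeas.aestronglyMeasurable]
    refine ⟨Filter.Eventually.of_forall hKint, ?_⟩
    refine Measure.integrableOn_of_bounded (M := x) (by simp) ?_
      ((ae_restrict_iff' measurableSet_Ioo).2 (Filter.Eventually.of_forall hbd))
    exact (hmeas.norm.stronglyMeasurable.integral_prod_left').aestronglyMeasurable
  have hR : ∀ η, he (-η * x ^ 2) * (1 / (2 * Real.sqrt (π * η ^ 3)) * Real.exp (-1 / (4 * η)))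
      = gg η + ∫ t in Ioo (0:ℝ) 1, K η t := by
    intro η
    change he (-η * x ^ 2) * gg η = _
    rw [he_eq, add_mul, one_mul, ← integral_mul_const]
    congr 1
    refine setIntegral_congr_fun measurableSet_Ioo fun t ht => ?_
    have : √t ^ 2 = t := Real.sq_sqrt ht.1.le
    simp only [hK]
    rw [mul_pow, this, show -η * (t * x ^ 2) = t * (-η * x ^ 2) by ring]
    ring
  simp_rw [hR]
  have hI : Integrable (fun η => ∫ t in Ioo (0:ℝ) 1, K η t) (volume.restrict (Ioi 0)) :=
    hprod.integral_prod_left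
  rw [integral_add hg0.1 hI, hg0.2, integral_integral_swap hprod, sqhe_eq]
  simp_rw [hin]

/-- For `x > 0`, `₍√h₎e(-x) = ∫_0^∞ ₕe(-η x²) g_{1/2}(η) dη` with
`g_{1/2}(η) = e^{-1/(4η)} / (2√(π η³))`. -/
theorem sqhe_levy_repr (x : ℝ) (hx : 0 < x) :
    sqhe (-x) = ∫ η in Set.Ioi (0:ℝ),
      he (-η * x ^ 2) * (1 / (2 * Real.sqrt (π * η ^ 3)) * Real.exp (-1 / (4 * η))) := by
  exact sqhe_levy_aux x hx
end

section
/- For every real x, ∑_{n=1}^∞ h_n x^n / n! = -e^x · ∑_{n=1}^∞ (-x)^n / (n · n!); equivalently ₕe(x) = 1 - e^x ∑_{n=1}^∞ (-x)^n/(n·n!). -/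
open Real MeasureTheory

/-- The alternating binomial sum for harmonic numbers. -/
lemma alt_choose_harm (n : ℕ) :
    ∑ k ∈ Finset.range n, (-1 : ℝ) ^ k * (n.choose (k + 1) : ℝ) / (k + 1 : ℝ) = harm n := by
  induction n with
  | zero => simp [harm]
  | succ n ih =>
    have h1 : ∀ k : ℕ, (-1 : ℝ) ^ k * ((n + 1).choose (k + 1) : ℝ) / (k + 1 : ℝ)
        = (-1 : ℝ) ^ k * (n.choose (k + 1) : ℝ) / (k + 1 : ℝ)
          + (-1 : ℝ) ^ k * ((n + 1).choose (k + 1) : ℝ) / (n + 1 : ℝ) := by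
      intro k
      have h2 : ((n + 1 : ℕ) : ℝ) * (n.choose k : ℝ)
          = ((n + 1).choose (k + 1) : ℝ) * ((k + 1 : ℕ) : ℝ) := by
        exact_mod_cast Nat.add_one_mul_choose_eq n k
      have h3 : ((n + 1).choose (k + 1) : ℝ) = n.choose k + n.choose (k + 1) := by
        exact_mod_cast Nat.choose_succ_succ n k
      push_cast at h2
      have hk : (k + 1 : ℝ) ≠ 0 := by positivity
      have hn : (n + 1 : ℝ) ≠ 0 := by positivity
      field_simp
      linear_combination (n + 1 : ℝ) * h3 + h2
    have h4 : ∑ k ∈ Finset.range (n + 1), (-1 : ℝ) ^ k * ((n + 1).choose (k + 1) : ℝ) = 1 := by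
      have h5 : ∑ k ∈ Finset.range (n + 1 + 1), (-1 : ℤ) ^ k * ((n + 1).choose k : ℤ) = 0 := by
        rw [Int.alternating_sum_range_choose]; simp
      rw [Finset.sum_range_succ'] at h5
      have h6 : ∑ k ∈ Finset.range (n + 1), (-1 : ℤ) ^ k * ((n + 1).choose (k + 1) : ℤ) = 1 := by
        simp only [pow_succ, mul_neg, mul_one, neg_mul, Finset.sum_neg_distrib] at h5
        simp at h5
        linarith
      exact_mod_cast h6
    rw [Finset.sum_congr rfl (fun k _ => h1 k), Finset.sum_add_distrib, ← Finset.sum_div, h4,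
      Finset.sum_range_succ, ih]
    simp [harm, Finset.sum_range_succ]

/-- For every real `x`, `∑_{n=1}^∞ h_n x^n / n! = -e^x ∑_{n=1}^∞ (-x)^n/(n·n!)`. -/
theorem he_gosper_series (x : ℝ) :
    (∑' n : ℕ, harm (n + 1) * x ^ (n + 1) / (Nat.factorial (n + 1) : ℝ)) =
      -Real.exp x * ∑' n : ℕ, (-x) ^ (n + 1) / ((n + 1) * (Nat.factorial (n + 1) : ℝ)) := by
  have hexp : Summable (fun n : ℕ => ‖x ^ n / (n.factorial : ℝ)‖) :=
    (Real.summable_pow_div_factorial x).norm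
  have hb : Summable (fun n : ℕ => ‖(-x) ^ (n + 1) / ((n + 1) * (Nat.factorial (n + 1) : ℝ))‖) := by
    have h := ((summable_nat_add_iff 1).2 (Real.summable_pow_div_factorial (-x))).norm
    refine Summable.of_nonneg_of_le (fun n => norm_nonneg _) (fun n => ?_) h
    rw [norm_div, norm_div]
    have hf : (0 : ℝ) < (Nat.factorial (n + 1) : ℝ) := by positivity
    refine div_le_div_of_nonneg_left (norm_nonneg _) (norm_pos_iff.2 hf.ne') ?_
    rw [norm_mul]
    refine le_mul_of_one_le_left (norm_nonneg _) ?_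
    rw [Real.norm_of_nonneg (by positivity)]
    have : (0 : ℝ) ≤ n := by positivity
    linarith
  have he : Real.exp x = ∑' n : ℕ, x ^ n / (n.factorial : ℝ) := by
    rw [Real.exp_eq_exp_ℝ, NormedSpace.exp_eq_tsum_div]
  rw [neg_mul, he, mul_comm, tsum_mul_tsum_eq_tsum_sum_range_of_summable_norm hb hexp, ← tsum_neg]
  refine tsum_congr (fun n => ?_)
  rw [← alt_choose_harm (n + 1), Finset.sum_mul, Finset.sum_div, ← Finset.sum_neg_distrib]
  refine Finset.sum_congr rfl (fun k hk => ?_)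
  have hkn : k ≤ n := Nat.lt_succ_iff.1 (Finset.mem_range.1 hk)
  obtain ⟨m, rfl⟩ := Nat.exists_eq_add_of_le hkn
  have hc : (((k + m + 1).choose (k + 1) : ℕ) : ℝ) * (Nat.factorial (k + 1) : ℝ)
      * (Nat.factorial m : ℝ) = (Nat.factorial (k + m + 1) : ℝ) := by
    have h := Nat.choose_mul_factorial_mul_factorial (n := k + m + 1) (k := k + 1) (by omega)
    rw [show k + m + 1 - (k + 1) = m by omega] at h
    exact_mod_cast h
  rw [show k + m - k = m by omega, ← hc]
  have h1 : (Nat.factorial (k + 1) : ℝ) ≠ 0 := by positivity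
  have h2 : (Nat.factorial m : ℝ) ≠ 0 := by positivity
  have h3 : (k + 1 : ℝ) ≠ 0 := by positivity
  have h4 : (((k + m + 1).choose (k + 1) : ℕ) : ℝ) ≠ 0 := by
    have := Nat.choose_pos (n := k + m + 1) (k := k + 1) (by omega)
    positivity
  rw [neg_pow x (k + 1)]
  field_simp
  ring
end

section
/- For every real x > 0, ₕe(x) = 1 + e^x (ln x + E₁(x) + γ), where E₁(x) = ∫_x^∞ e^{-t}/t dt and γ is the Euler–Mascheroni constant (Gosper's generating function of the harmonic numbers). -/
open Real MeasureTheory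

open Filter Topology Set in
theorem aux_log_exp :
    IntegrableOn (fun t : ℝ => Real.log t * Real.exp (-t)) (Ioi 0) ∧
      ∫ t in Ioi (0:ℝ), Real.log t * Real.exp (-t) = -Real.eulerMascheroniConstant := by
  have h := mellin_hasDerivAt_of_isBigO_rpow (E := ℂ) (a := 2) (b := 0)
    (f := fun x : ℝ => ((Real.exp (-x) : ℝ) : ℂ)) (s := 1) ?_ ?_ (by norm_num) ?_ (by norm_num)
  · have h1 := h.1
    have h2 := h.2
    have hd : HasDerivAt (mellin fun x : ℝ => ((Real.exp (-x) : ℝ) : ℂ))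
        (-Real.eulerMascheroniConstant) 1 := by
      rw [← Complex.GammaIntegral_eq_mellin]
      refine Complex.hasDerivAt_Gamma_one.congr_of_eventuallyEq ?_
      have : IsOpen {s : ℂ | 0 < s.re} := Complex.continuous_re.isOpen_preimage _ isOpen_Ioi
      filter_upwards [this.mem_nhds (show (0:ℝ) < (1:ℂ).re by norm_num)] with a ha
      exact (Complex.Gamma_eq_integral ha).symm
    have h3 := h2.unique hd
    constructor
    · have h4 : IntegrableOn (fun t : ℝ => ((Real.log t * Real.exp (-t) : ℝ) : ℂ)) (Ioi 0) := by
        simpa [MellinConvergent] using h1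
      exact h4.re
    · have h5 : ∫ t in Ioi (0:ℝ), ((Real.log t * Real.exp (-t) : ℝ) : ℂ)
          = ((-Real.eulerMascheroniConstant : ℝ) : ℂ) := by
        simpa [mellin] using h3
      rw [integral_complex_ofReal] at h5
      exact_mod_cast h5
  · refine (Continuous.continuousOn ?_).locallyIntegrableOn measurableSet_Ioi
    exact Complex.continuous_ofReal.comp (Real.continuous_exp.comp continuous_neg)
  · rw [← Asymptotics.isBigO_norm_left]
    simp_rw [Complex.norm_real, Asymptotics.isBigO_norm_left]
    simpa only [neg_one_mul] using (isLittleO_exp_neg_mul_rpow_atTop zero_lt_one _).isBigO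
  · simp_rw [neg_zero, Real.rpow_zero]
    refine Asymptotics.isBigO_const_of_tendsto (?_ : Tendsto _ _ (𝓝 (1 : ℂ))) one_ne_zero
    rw [(by simp : (1 : ℂ) = Real.exp (-0))]
    exact (Complex.continuous_ofReal.comp
      (Real.continuous_exp.comp continuous_neg)).continuousWithinAt

theorem harm_bounds (n : ℕ) : 0 ≤ harm n ∧ harm n ≤ n := by
  induction n with
  | zero => simp [harm]
  | succ k ih =>
    have h : harm (k+1) = harm k + 1 / (k + 1 : ℝ) := by simp [harm, Finset.sum_range_succ]
    have h0 : (0:ℝ) ≤ 1 / (k + 1 : ℝ) := by positivity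
    have h1 : 1 / (k + 1 : ℝ) ≤ 1 := by
      rw [div_le_one (by positivity)]; linarith [Nat.cast_nonneg (α := ℝ) k]
    push_cast
    constructor <;> linarith [ih.1, ih.2]

theorem harm_succ' (k : ℕ) : harm (k+1) = harm k + 1 / (k + 1 : ℝ) := by
  simp [harm, Finset.sum_range_succ]

theorem sum_bd (R : ℝ) (_ : ℕ) : Summable fun n : ℕ => ((n:ℝ) + 1) * R ^ n / (n.factorial : ℝ) := by
  have h := Real.summable_pow_div_factorial R
  have h2 : Summable fun n : ℕ => (n:ℝ) * R ^ n / (n.factorial : ℝ) := by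
    rw [← summable_nat_add_iff 1]
    refine (h.mul_left R).congr fun n => ?_
    rw [Nat.factorial_succ]
    push_cast
    have : (n:ℝ) + 1 ≠ 0 := by positivity
    field_simp
    try ring
  refine (h2.add h).congr fun n => ?_
  ring

theorem summ_harm (x : ℝ) : Summable fun n : ℕ => harm n * x ^ n / (n.factorial : ℝ) := by
  refine Summable.of_norm_bounded (sum_bd |x| 0) fun n => ?_
  rw [norm_div, norm_mul, norm_pow, Real.norm_eq_abs, Real.norm_eq_abs, Real.norm_eq_abs,
    abs_of_nonneg (harm_bounds n).1, Nat.abs_cast]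
  gcongr
  linarith [(harm_bounds n).2]

theorem hasDerivAt_S (x : ℝ) (hx : 0 < x) :
    HasDerivAt (fun y => ∑' n : ℕ, harm n * y ^ n / (n.factorial : ℝ))
      ((∑' n : ℕ, harm n * x ^ n / (n.factorial : ℝ)) + (Real.exp x - 1) / x) x := by
  have hd := hasDerivAt_tsum_of_isPreconnected (𝕜 := ℝ) (F := ℝ) (t := Metric.ball 0 (x+1))
    (g := fun (n:ℕ) y => harm (n+1) * y ^ (n+1) / ((n+1).factorial : ℝ))
    (g' := fun n y => harm (n+1) * y ^ n / (n.factorial : ℝ))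
    (y₀ := x) (y := x) (sum_bd (x+1) 0) Metric.isOpen_ball
    (convex_ball 0 (x+1)).isPreconnected ?_ ?_ ?_ ((summable_nat_add_iff 1).2 (summ_harm x)) ?_
  · have e1 : (fun y => ∑' n : ℕ, harm n * y ^ n / (n.factorial : ℝ)) =
        fun y => ∑' n : ℕ, harm (n+1) * y ^ (n+1) / ((n+1).factorial : ℝ) := by
      funext y
      rw [(summ_harm y).tsum_eq_zero_add]
      simp [harm]
    have e2 : HasSum (fun n : ℕ => x ^ n / ((n+1).factorial : ℝ)) ((Real.exp x - 1) / x) := by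
      have h := NormedSpace.expSeries_div_hasSum_exp (𝔸 := ℝ) x
      rw [← Real.exp_eq_exp_ℝ] at h
      have h' := ((hasSum_nat_add_iff' 1).2 h).div_const x
      simp only [Finset.sum_range_one, pow_zero, Nat.factorial_zero, Nat.cast_one, div_one] at h'
      refine h'.congr_fun ?_ 
      intro n
      field_simp
      ring
    have e3 : (∑' n : ℕ, harm n * x ^ n / (n.factorial : ℝ)) + (Real.exp x - 1) / x =
        ∑' n : ℕ, harm (n+1) * x ^ n / (n.factorial : ℝ) := by
      rw [← e2.tsum_eq, ← (summ_harm x).tsum_add e2.summable]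
      refine tsum_congr fun n => ?_
      rw [harm_succ', Nat.factorial_succ]
      push_cast
      have : (n:ℝ) + 1 ≠ 0 := by positivity
      field_simp
    rw [e3, e1]
    exact hd
  · intro n y _
    have := ((hasDerivAt_pow (n+1) y).const_mul (harm (n+1))).div_const ((n+1).factorial : ℝ)
    refine this.congr_deriv ?_
    rw [Nat.factorial_succ]
    push_cast
    have : (n:ℝ) + 1 ≠ 0 := by positivity
    field_simp
  · intro n y hy
    rw [norm_div, norm_mul, norm_pow, Real.norm_eq_abs, Real.norm_eq_abs, Real.norm_eq_abs,
      abs_of_nonneg (harm_bounds (n+1)).1, Nat.abs_cast]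
    have hy' : |y| ≤ x + 1 := by
      have := Metric.mem_ball.1 hy
      rw [Real.dist_eq, sub_zero] at this
      exact this.le
    have := (harm_bounds (n+1)).2
    push_cast at this
    gcongr
  · simp [abs_of_pos hx]
  · simp [abs_of_pos hx]

theorem continuous_S : Continuous (fun y => ∑' n : ℕ, harm n * y ^ n / (n.factorial : ℝ)) := by
  rw [continuous_iff_continuousAt]
  intro x
  have h : ContinuousOn (fun y => ∑' n : ℕ, harm n * y ^ n / (n.factorial : ℝ))
      (Metric.ball 0 (|x|+1)) := by
    refine continuousOn_tsum (u := fun n : ℕ => ((n:ℝ) + 1) * (|x|+1) ^ n / (n.factorial : ℝ))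
      (fun n => by fun_prop) (sum_bd _ 0) ?_
    intro n y hy
    rw [norm_div, norm_mul, norm_pow, Real.norm_eq_abs, Real.norm_eq_abs, Real.norm_eq_abs,
      abs_of_nonneg (harm_bounds n).1, Nat.abs_cast]
    have hy' : |y| ≤ |x| + 1 := by
      have := Metric.mem_ball.1 hy
      rw [Real.dist_eq, sub_zero] at this
      exact this.le
    have := (harm_bounds n).2
    gcongr
    linarith
  exact h.continuousAt (Metric.isOpen_ball.mem_nhds (by simp))

open Filter Topology Set in
theorem E1_parts (x : ℝ) (hx : 0 < x) :
    ∫ t in Ioi x, Real.exp (-t) / t =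
      -(Real.exp (-x) * Real.log x) + ∫ t in Ioi x, Real.log t * Real.exp (-t) := by
  have i1 : IntegrableOn (fun t : ℝ => Real.exp (-t) / t) (Ioi x) := by
    refine Integrable.mono' ((integrableOn_exp_neg_Ioi x).div_const x) ?_ ?_
    · exact (by fun_prop : Measurable fun t : ℝ => Real.exp (-t) / t).aestronglyMeasurable
    · refine (ae_restrict_iff' measurableSet_Ioi).2 (Eventually.of_forall fun t ht => ?_)
      have ht' : x < t := ht
      have : 0 < t := hx.trans ht'
      rw [Real.norm_of_nonneg (by positivity)]
      gcongr
  have i2 : IntegrableOn (fun t : ℝ => Real.log t * Real.exp (-t)) (Ioi x) :=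
    aux_log_exp.1.mono_set (Ioi_subset_Ioi hx.le)
  have h := integral_Ioi_of_hasDerivAt_of_tendsto' (a := x) (m := 0)
    (f := fun t => Real.exp (-t) * Real.log t)
    (f' := fun t => Real.exp (-t) / t - Real.log t * Real.exp (-t)) ?_ (i1.sub i2) ?_
  · rw [integral_sub i1 i2] at h
    linarith
  · intro t ht
    have ht0 : t ≠ 0 := (hx.trans_le ht).ne'
    have := ((Real.hasDerivAt_exp (-t)).comp t (hasDerivAt_neg t)).mul (Real.hasDerivAt_log ht0)
    refine this.congr_deriv ?_
    simp only [Function.comp]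
    field_simp
    ring
  · have h1 := Real.tendsto_pow_mul_exp_neg_atTop_nhds_zero 1
    refine squeeze_zero' ?_ ?_ h1
    · filter_upwards [eventually_ge_atTop 1] with t ht
      have := Real.log_nonneg ht
      positivity
    · filter_upwards [eventually_ge_atTop 1] with t ht
      rw [pow_one, mul_comm]
      gcongr
      exact Real.log_le_self (by linarith)

open Filter Topology Set in
theorem P_eq (x : ℝ) (hx : 0 < x) :
    Real.exp (-x) * (∑' n : ℕ, harm n * x ^ n / (n.factorial : ℝ)) =
      (1 - Real.exp (-x)) * Real.log x - ∫ t in (0:ℝ)..x, Real.log t * Real.exp (-t) := by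
  have h := intervalIntegral.integral_eq_sub_of_hasDerivAt_of_le (a := 0) (b := x) hx.le
    (f := fun t => Real.exp (-t) * (∑' n : ℕ, harm n * t ^ n / (n.factorial : ℝ)) -
      (1 - Real.exp (-t)) * Real.log t)
    (f' := fun t => -(Real.log t * Real.exp (-t))) ?_ ?_ ?_
  · have e0 : ∑' n : ℕ, harm n * (0:ℝ) ^ n / (n.factorial : ℝ) = 0 := by
      rw [(summ_harm 0).tsum_eq_zero_add]
      simp [harm]
    rw [intervalIntegral.integral_neg] at h
    simp only [e0, Real.log_zero] at h
    linarith
  · refine ContinuousOn.sub ?_ ?_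
    · have := continuous_S
      fun_prop
    · intro t ht
      rcases ht.1.eq_or_lt with rfl | h0
      · have hm : Tendsto (fun t : ℝ => |t * Real.log t|) (𝓝[Icc 0 x] 0) (𝓝 0) := by
          have := (Real.continuous_mul_log.abs.tendsto 0)
          simp only [zero_mul, abs_zero] at this
          exact this.mono_left nhdsWithin_le_nhds
        unfold ContinuousWithinAt
        simp only [Real.log_zero, mul_zero]
        refine squeeze_zero_norm' ?_ hm
        filter_upwards [self_mem_nhdsWithin] with t ht
        rw [Real.norm_eq_abs, abs_mul, abs_mul]
        have h1 : Real.exp (-t) ≤ 1 := Real.exp_le_one_iff.2 (by linarith [ht.1])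
        have h2 := Real.add_one_le_exp (-t)
        refine mul_le_mul_of_nonneg_right ?_ (abs_nonneg _)
        rw [abs_of_nonneg (by linarith), abs_of_nonneg ht.1]
        linarith
      · have h0' : t ≠ 0 := h0.ne'
        refine ContinuousAt.continuousWithinAt ?_
        fun_prop (disch := assumption)
  · intro t ht
    have ht0 : t ≠ 0 := ht.1.ne'
    have he := (Real.hasDerivAt_exp (-t)).comp t (hasDerivAt_neg t)
    have := (he.mul (hasDerivAt_S t ht.1)).sub
      ((he.const_sub 1).mul (Real.hasDerivAt_log ht0))
    refine this.congr_deriv ?_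
    simp only [Function.comp]
    have hp : Real.exp (-t) * Real.exp t = 1 := by rw [← Real.exp_add]; simp
    field_simp
    linear_combination hp
  · rw [intervalIntegrable_iff_integrableOn_Ioc_of_le hx.le]
    exact (aux_log_exp.1.mono_set Ioc_subset_Ioi_self).neg

/-- Gosper's generating function: for `x > 0`,
`ₕe(x) = 1 + e^x (ln x + E₁(x) + γ)` where `E₁(x) = ∫_x^∞ e^{-t}/t dt`. -/
theorem he_gosper (x : ℝ) (hx : 0 < x) :
    he x = 1 + Real.exp x *
      (Real.log x + (∫ t in Set.Ioi x, Real.exp (-t) / t) +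
        Real.eulerMascheroniConstant) := by
  have e0 : he x = 1 + ∑' n : ℕ, harm n * x ^ n / (n.factorial : ℝ) := by
    rw [he, (summ_harm x).tsum_eq_zero_add]
    simp [harm]
  have hP := P_eq x hx
  have hs : (∫ t in (0:ℝ)..x, Real.log t * Real.exp (-t)) +
      ∫ t in Set.Ioi x, Real.log t * Real.exp (-t) = -Real.eulerMascheroniConstant := by
    rw [← aux_log_exp.2, intervalIntegral.integral_of_le hx.le,
      ← setIntegral_union (Set.Ioc_disjoint_Ioi le_rfl) measurableSet_Ioi
        (aux_log_exp.1.mono_set Set.Ioc_subset_Ioi_self)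
        (aux_log_exp.1.mono_set (Set.Ioi_subset_Ioi hx.le)),
      Set.Ioc_union_Ioi_eq_Ioi hx.le]
  have hp : Real.exp x * Real.exp (-x) = 1 := by rw [← Real.exp_add]; simp
  rw [e0, E1_parts x hx]
  linear_combination Real.exp x * hP - Real.exp x * hs -
    (∑' n : ℕ, harm n * x ^ n / (n.factorial : ℝ)) * hp
end

section
/- For every positive integer m and every real x, the m-th derivative of the harmonic based exponential function is given by (d/dx)^m ₕe(x) = h_m + ∑_{n=1}^∞ h_{n+m} x^n / n!. -/
open Real MeasureTheory

lemma harm_abs_le (k : ℕ) : |harm k| ≤ 2 ^ k := by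
  have h0 : 0 ≤ harm k := Finset.sum_nonneg fun r _ => by positivity
  have h1 : harm k ≤ k := by
    unfold harm
    calc ∑ r ∈ Finset.range k, 1 / (r + 1 : ℝ) ≤ ∑ r ∈ Finset.range k, (1 : ℝ) := by
          refine Finset.sum_le_sum fun r _ => ?_
          rw [div_le_one (by positivity)]
          have : (0 : ℝ) ≤ r := Nat.cast_nonneg r
          linarith
      _ = k := by simp
  have h2 : (k : ℝ) ≤ 2 ^ k := by exact_mod_cast (Nat.lt_two_pow_self (n := k)).le
  rw [abs_of_nonneg h0]
  exact h1.trans h2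

lemma harm_bound_summable (m : ℕ) (R : ℝ) :
    Summable fun n : ℕ => (2 : ℝ) ^ m * ((2 * R) ^ n / (Nat.factorial n : ℝ)) :=
  (Real.summable_pow_div_factorial (2 * R)).mul_left _

lemma harm_term_le (m n : ℕ) (R x : ℝ) (hx : |x| ≤ R) :
    ‖harm (n + m) * x ^ n / (Nat.factorial n : ℝ)‖ ≤
      (2 : ℝ) ^ m * ((2 * R) ^ n / (Nat.factorial n : ℝ)) := by
  rw [Real.norm_eq_abs, abs_div, abs_mul, abs_pow, Nat.abs_cast]
  have h1 := harm_abs_le (n + m)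
  have h2 : |x| ^ n ≤ R ^ n := pow_le_pow_left₀ (abs_nonneg x) hx n
  have h3 : |harm (n + m)| * |x| ^ n ≤ 2 ^ (n + m) * R ^ n :=
    mul_le_mul h1 h2 (by positivity) (by positivity)
  calc |harm (n + m)| * |x| ^ n / (Nat.factorial n : ℝ)
      ≤ 2 ^ (n + m) * R ^ n / (Nat.factorial n : ℝ) := by gcongr
    _ = _ := by rw [mul_pow, pow_add]; ring

lemma harm_summable (m : ℕ) (x : ℝ) :
    Summable fun n : ℕ => harm (n + m) * x ^ n / (Nat.factorial n : ℝ) :=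
  Summable.of_norm_bounded (harm_bound_summable m |x|) fun n => harm_term_le m n _ x le_rfl

lemma harm_tail_hasDerivAt (m : ℕ) (x : ℝ) :
    HasDerivAt
      (fun y : ℝ => ∑' n : ℕ, harm (n + 1 + m) * y ^ (n + 1) / (Nat.factorial (n + 1) : ℝ))
      (harm (m + 1) + ∑' n : ℕ,
        harm (n + 1 + (m + 1)) * x ^ (n + 1) / (Nat.factorial (n + 1) : ℝ)) x := by
  have key : HasDerivAt
      (fun y : ℝ => ∑' n : ℕ, harm (n + 1 + m) * y ^ (n + 1) / (Nat.factorial (n + 1) : ℝ))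
      (∑' n : ℕ, harm (n + (m + 1)) * x ^ n / (Nat.factorial n : ℝ)) x := by
    refine hasDerivAt_tsum_of_isPreconnected (t := Metric.ball (0 : ℝ) (|x| + 1)) (y₀ := x)
      (g' := fun n y => harm (n + (m + 1)) * y ^ n / (Nat.factorial n : ℝ))
      (harm_bound_summable (m + 1) (|x| + 1)) Metric.isOpen_ball
      (convex_ball (0 : ℝ) (|x| + 1)).isPreconnected ?_ ?_ ?_ ?_ ?_
    · intro n y _
      have h := ((hasDerivAt_pow (n + 1) y).const_mul (harm (n + 1 + m))).div_const
        (Nat.factorial (n + 1) : ℝ)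
      refine h.congr_deriv ?_
      have h1 : (Nat.factorial n : ℝ) ≠ 0 := by positivity
      have h2 : ((n : ℝ) + 1) ≠ 0 := by positivity
      rw [Nat.factorial_succ, show n + (m + 1) = n + 1 + m by ring]
      push_cast
      field_simp
    · intro n y hy
      refine harm_term_le (m + 1) n _ y ?_
      have := Metric.mem_ball.1 hy
      rw [Real.dist_eq, sub_zero] at this
      exact this.le
    · simp
    · exact (summable_nat_add_iff 1).2 (harm_summable m x)
    · simp
  rw [(harm_summable (m + 1) x).tsum_eq_zero_add] at key
  simpa using key

/-- `(d/dx)^m ₕe(x) = h_m + ∑_{n=1}^∞ h_{n+m} x^n / n!`. -/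
theorem he_iteratedDeriv (m : ℕ) (hm : 0 < m) (x : ℝ) :
    iteratedDeriv m he x =
      harm m + ∑' n : ℕ, harm (n + 1 + m) * x ^ (n + 1) / (Nat.factorial (n + 1) : ℝ) := by
  obtain ⟨k, rfl⟩ : ∃ k, m = k + 1 := ⟨m - 1, by omega⟩
  clear hm
  induction k generalizing x with
  | zero =>
    rw [zero_add, iteratedDeriv_one]
    exact ((harm_tail_hasDerivAt 0 x).const_add 1).deriv
  | succ k ih =>
    rw [iteratedDeriv_succ, funext ih]
    exact ((harm_tail_hasDerivAt (k + 1) x).const_add _).deriv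
end

section
/- For every integer n ≥ 1, the harmonic polynomial evaluated at -1 satisfies h_n(-1) = (-1)^n (1 - 1/n). -/
open Real MeasureTheory

/-- The `n`-th harmonic polynomial `h_n(x) = x^n + ∑_{s=1}^n C(n,s) h_s x^{n-s}`. -/
noncomputable def hp (n : ℕ) (x : ℝ) : ℝ :=
  x ^ n + ∑ s ∈ Finset.Icc 1 n, (n.choose s : ℝ) * harm s * x ^ (n - s)

open scoped Nat in
theorem fwdDiff_inv_aux (n : ℕ) (y : ℕ) :
    (fwdDiff 1)^[n] (fun x : ℕ => 1 / (x + 1 : ℝ)) y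
      = (-1 : ℝ) ^ n * (n ! : ℝ) * (y ! : ℝ) / ((y + n + 1)! : ℝ) := by
  induction n generalizing y with
  | zero =>
    have h1 : (y ! : ℝ) ≠ 0 := by exact_mod_cast Nat.factorial_ne_zero y
    have h2 : (y + 1 : ℝ) ≠ 0 := by positivity
    simp only [Function.iterate_zero, id, Nat.add_zero, Nat.factorial_succ]
    push_cast
    field_simp
    simp
  | succ n ih =>
    rw [Function.iterate_succ_apply', fwdDiff, ih, ih]
    have h1 : ((y + n + 1)! : ℝ) ≠ 0 := by exact_mod_cast Nat.factorial_ne_zero _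
    have h2 : (y + n + 1 + 1 : ℝ) ≠ 0 := by positivity
    rw [show y + 1 + n + 1 = (y + n + 1) + 1 by ring,
      show y + (n + 1) + 1 = (y + n + 1) + 1 by ring,
      Nat.factorial_succ (y + n + 1), Nat.factorial_succ y, Nat.factorial_succ n]
    push_cast
    field_simp
    ring

theorem sum_harm_aux (n : ℕ) :
    ∑ k ∈ Finset.range (n + 1 + 1), (-1 : ℝ) ^ (n + 1 - k) * ((n + 1).choose k : ℝ) * harm k
      = (-1 : ℝ) ^ n / (n + 1) := by
  have h := fwdDiff_iter_eq_sum_shift (1 : ℕ) harm (n + 1) 0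
  have hd : fwdDiff 1 harm = fun x : ℕ => 1 / (x + 1 : ℝ) := by
    funext x
    simp [fwdDiff, harm, Finset.sum_range_succ]
  rw [Function.iterate_succ_apply, hd, fwdDiff_inv_aux] at h
  simp only [zero_add, smul_eq_mul, mul_one, zsmul_eq_mul, Nat.factorial_succ,
    Nat.factorial_zero] at h
  push_cast at h
  rw [← h]
  have h1 : (n.factorial : ℝ) ≠ 0 := by exact_mod_cast Nat.factorial_ne_zero n
  have h2 : (n + 1 : ℝ) ≠ 0 := by positivity
  field_simp

/-- For `n ≥ 1`, `h_n(-1) = (-1)^n (1 - 1/n)`. -/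
theorem hp_neg_one (n : ℕ) (hn : 1 ≤ n) :
    hp n (-1) = (-1 : ℝ) ^ n * (1 - 1 / (n : ℝ)) := by
  obtain ⟨m, rfl⟩ : ∃ m, n = m + 1 := ⟨n - 1, by omega⟩
  have h := sum_harm_aux m
  have h0 : harm 0 = 0 := by simp [harm]
  rw [Finset.range_eq_Ico, Finset.sum_eq_sum_Ico_succ_bot (by omega), h0, mul_zero, zero_add] at h
  have e : Finset.Icc 1 (m + 1) = Finset.Ico (0 + 1) (m + 1 + 1) := by
    ext; simp [Finset.mem_Icc]
  have h' : ∑ s ∈ Finset.Icc 1 (m + 1), ((m + 1).choose s : ℝ) * harm s * (-1) ^ (m + 1 - s)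
      = (-1 : ℝ) ^ m / (m + 1) := by
    rw [e, ← h]
    exact Finset.sum_congr rfl fun _ _ => by ring
  rw [hp, h']
  push_cast
  ring
end

section
/- For every integer n ≥ 1 and every real x, the harmonic Hermite polynomials satisfy the differential equation x · ₕH_n'(x) + 2 · ₕH_n''(x) = n · ₕH_n(x) - 2 α_n''(x), where α_n(x) = n! ∑_{s=1}^{⌊n/2⌋} x^{n-2s} / (s! (n-2s)! (s+1)). -/
open Real MeasureTheory

/-- `h₀* = 1` and `h_r* = h_r` for `r ≥ 1`. -/
noncomputable def hstar (n : ℕ) : ℝ := if n = 0 then 1 else harm n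

/-- The `n`-th harmonic Hermite polynomial
`ₕH_n(x) = n! ∑_{r=0}^{⌊n/2⌋} h_r* x^{n-2r} / ((n-2r)! r!)`. -/
noncomputable def hH (n : ℕ) (x : ℝ) : ℝ :=
  (Nat.factorial n : ℝ) * ∑ r ∈ Finset.range (n / 2 + 1),
    hstar r * x ^ (n - 2 * r) / ((Nat.factorial (n - 2 * r) : ℝ) * (Nat.factorial r : ℝ))

/-- `α_n(x) = n! ∑_{s=1}^{⌊n/2⌋} x^{n-2s} / (s! (n-2s)! (s+1))`. -/
noncomputable def alphaPoly (n : ℕ) (x : ℝ) : ℝ :=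
  (Nat.factorial n : ℝ) * ∑ s ∈ Finset.Icc 1 (n / 2),
    x ^ (n - 2 * s) /
      ((Nat.factorial s : ℝ) * (Nat.factorial (n - 2 * s) : ℝ) * (s + 1))

noncomputable def FF (n : ℕ) (a : ℕ → ℝ) (x : ℝ) : ℝ :=
  ∑ r ∈ Finset.range (n / 2 + 1), a r * (x ^ (n - 2 * r) / (Nat.factorial (n - 2 * r) : ℝ))

lemma FF_deriv (n : ℕ) (a : ℕ → ℝ) : deriv (FF n a) = fun x =>
    ∑ r ∈ Finset.range (n / 2 + 1), a r * (((n - 2 * r : ℕ) : ℝ) * x ^ (n - 2 * r - 1) /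
      (Nat.factorial (n - 2 * r) : ℝ)) := by
  funext x
  apply HasDerivAt.deriv
  unfold FF
  apply HasDerivAt.fun_sum
  intro r _
  exact ((hasDerivAt_pow _ x).div_const _).const_mul _

lemma FF_deriv2 (n : ℕ) (a : ℕ → ℝ) (x : ℝ) : deriv (deriv (FF n a)) x =
    ∑ r ∈ Finset.range (n / 2), a r * (x ^ (n - 2 * (r + 1)) /
      (Nat.factorial (n - 2 * (r + 1)) : ℝ)) := by
  have h : deriv (deriv (FF n a)) x = ∑ r ∈ Finset.range (n / 2 + 1), a r *
      (((n - 2 * r : ℕ) : ℝ) * (((n - 2 * r - 1 : ℕ) : ℝ) * x ^ (n - 2 * r - 1 - 1)) /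
      (Nat.factorial (n - 2 * r) : ℝ)) := by
    rw [FF_deriv]
    apply HasDerivAt.deriv
    apply HasDerivAt.fun_sum
    intro r _
    exact (((hasDerivAt_pow _ x).const_mul _).div_const _).const_mul _
  rw [h, Finset.sum_range_succ]
  have h0 : ((n - 2 * (n / 2) : ℕ) : ℝ) * ((n - 2 * (n / 2) - 1 : ℕ) : ℝ) = 0 := by
    have : n - 2 * (n / 2) = 0 ∨ n - 2 * (n / 2) - 1 = 0 := by omega
    rcases this with h | h <;> simp [h]
  rw [← mul_assoc ((n - 2 * (n / 2) : ℕ) : ℝ), h0]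
  simp only [zero_mul, zero_div, mul_zero, add_zero]
  apply Finset.sum_congr rfl
  intro r hr
  rw [Finset.mem_range] at hr
  obtain ⟨k, hk⟩ : ∃ k, n - 2 * r = k + 2 := ⟨n - 2 * r - 2, by omega⟩
  have hk' : n - 2 * (r + 1) = k := by omega
  rw [hk, hk', Nat.factorial_succ, Nat.factorial_succ]
  have : (Nat.factorial k : ℝ) ≠ 0 := by positivity
  simp only [Nat.add_sub_cancel, show k + 2 - 1 = k + 1 from rfl]
  push_cast
  field_simp
  ring

lemma FF_x_deriv (n : ℕ) (a : ℕ → ℝ) (x : ℝ) : x * deriv (FF n a) x =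
    ∑ r ∈ Finset.range (n / 2 + 1), ((n : ℝ) - 2 * r) * a r * (x ^ (n - 2 * r) /
      (Nat.factorial (n - 2 * r) : ℝ)) := by
  rw [FF_deriv, Finset.mul_sum]
  apply Finset.sum_congr rfl
  intro r hr
  rw [Finset.mem_range] at hr
  have hc : ((n - 2 * r : ℕ) : ℝ) = (n : ℝ) - 2 * r := by
    rw [Nat.cast_sub (by omega)]; push_cast; ring
  rw [← hc]
  rcases Nat.eq_zero_or_pos (n - 2 * r) with h | h
  · simp [h]
  · obtain ⟨k, hk⟩ : ∃ k, n - 2 * r = k + 1 := ⟨n - 2 * r - 1, by omega⟩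
    rw [hk, Nat.add_sub_cancel, pow_succ]
    ring

lemma FF_ode (n : ℕ) (a b : ℕ → ℝ) (hab : ∀ r, a r + b r = (r + 1) * a (r + 1)) (x : ℝ) :
    x * deriv (FF n a) x + 2 * deriv (deriv (FF n a)) x =
      (n : ℝ) * FF n a x - 2 * deriv (deriv (FF n b)) x := by
  rw [FF_x_deriv, FF_deriv2, FF_deriv2, FF, Finset.sum_range_succ', Finset.sum_range_succ']
  simp only [mul_add, Finset.mul_sum]
  have : ∀ A B C D E F : ℝ, E = F → A + C - B + D = 0 → A + E + C = B + F - D := by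
    intros; linarith
  apply this
  · simp; ring
  · rw [← Finset.sum_add_distrib, ← Finset.sum_sub_distrib, ← Finset.sum_add_distrib]
    apply Finset.sum_eq_zero
    intro r _
    push_cast
    linear_combination 2 * (x ^ (n - 2 * (r + 1)) / (Nat.factorial (n - 2 * (r + 1)) : ℝ)) * hab r

lemma hH_eq (n : ℕ) : hH n = fun x => (Nat.factorial n : ℝ) *
    FF n (fun r => hstar r / (Nat.factorial r : ℝ)) x := by
  funext x
  unfold hH FF
  congr 1
  apply Finset.sum_congr rfl
  intro r _
  field_simp

lemma alpha_eq (n : ℕ) : alphaPoly n = fun x => (Nat.factorial n : ℝ) *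
    FF n (fun r => if r = 0 then 0 else 1 / ((Nat.factorial r : ℝ) * (r + 1))) x := by
  funext x
  unfold alphaPoly FF
  congr 1
  rw [Finset.sum_range_succ', Finset.range_eq_Ico, Finset.sum_Ico_add' (fun r => (if r = 0 then (0:ℝ) else 1 / ((Nat.factorial r : ℝ) * (r + 1))) * (x ^ (n - 2 * r) / (Nat.factorial (n - 2 * r) : ℝ))) 0 (n / 2) 1]
  simp only [if_true, zero_mul, add_zero, zero_add]
  apply Finset.sum_congr
  · ext r; simp
  intro r hr
  have : r ≠ 0 := by simp at hr; omega
  rw [if_neg this]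
  field_simp

lemma coef (r : ℕ) : hstar r / (Nat.factorial r : ℝ) +
    (if r = 0 then 0 else 1 / ((Nat.factorial r : ℝ) * (r + 1))) =
    (r + 1) * (hstar (r + 1) / (Nat.factorial (r + 1) : ℝ)) := by
  rcases Nat.eq_zero_or_pos r with h | h
  · subst h; simp [hstar, harm]
  · have h' : r ≠ 0 := by omega
    simp only [hstar, h', if_false, Nat.succ_ne_zero, harm, Finset.sum_range_succ,
      Nat.factorial_succ]
    push_cast
    field_simp

/-- For `n ≥ 1`, `x ₕH_n'(x) + 2 ₕH_n''(x) = n ₕH_n(x) - 2 α_n''(x)`. -/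
theorem hH_ode (n : ℕ) (hn : 1 ≤ n) (x : ℝ) :
    x * deriv (hH n) x + 2 * deriv (deriv (hH n)) x =
      (n : ℝ) * hH n x - 2 * deriv (deriv (alphaPoly n)) x := by
  have h := FF_ode n _ _ coef x
  rw [hH_eq, alpha_eq]
  have hd : ∀ (c : ℝ) (f : ℝ → ℝ), deriv (fun y => c * f y) = fun y => c * deriv f y := by
    intro c f
    funext y
    exact deriv_const_mul_field c
  simp only [hd]
  linear_combination (Nat.factorial n : ℝ) * h
end

section
/- For every nonnegative integer n, the truncated exponential number satisfies the integral representation e_n = (1/n!) ∫_0^∞ e^{-s} (1 + s)^n ds; moreover ∫_{-∞}^{∞} (∑_{r=0}^∞ (-1)^r (e_r/r!) x^{2r}) dx = ∫_0^∞ e^{-s} (1+s)^{-1/2} ds, the series under the integral converging for every real x to an integrable function. -/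
open Real MeasureTheory

/-- The truncated exponential number `e_n = ∑_{r=0}^n 1/r!`. -/
noncomputable def te (n : ℕ) : ℝ := ∑ r ∈ Finset.range (n + 1), 1 / (Nat.factorial r : ℝ)


lemma te_nonneg (n : ℕ) : 0 ≤ te n := by
  unfold te; positivity

lemma te_le (n : ℕ) : te n ≤ Real.exp 1 := by
  have := Real.sum_le_exp_of_nonneg (x := 1) zero_le_one (n + 1)
  simpa [te] using this

lemma te_succ (n : ℕ) : te (n + 1) = te n + 1 / (Nat.factorial (n + 1) : ℝ) := by
  unfold te; rw [Finset.sum_range_succ]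

/-- Exponential generating function of a sequence. -/
noncomputable def egf (b : ℕ → ℝ) (t : ℝ) : ℝ := ∑' r : ℕ, b r * (t ^ r / (Nat.factorial r : ℝ))

lemma egf_summable {b : ℕ → ℝ} {C : ℝ} (hb : ∀ r, |b r| ≤ C) (t : ℝ) :
    Summable (fun r : ℕ => b r * (t ^ r / (Nat.factorial r : ℝ))) := by
  refine Summable.of_norm_bounded ((Real.summable_pow_div_factorial |t|).mul_left C) fun r => ?_
  rw [norm_mul, norm_div, norm_pow, Real.norm_eq_abs, Real.norm_eq_abs, Real.norm_natCast]
  exact mul_le_mul_of_nonneg_right (hb r) (by positivity)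

lemma egf_hasDerivAt {b : ℕ → ℝ} {C : ℝ} (hb : ∀ r, |b r| ≤ C) (t : ℝ) :
    HasDerivAt (egf b) (egf (fun r => b (r + 1)) t) t := by
  have hC : 0 ≤ C := (abs_nonneg _).trans (hb 0)
  have hsplit : egf b = fun t => b 0 + ∑' r : ℕ,
      b (r + 1) * (t ^ (r + 1) / (Nat.factorial (r + 1) : ℝ)) := by
    funext s
    unfold egf
    rw [(egf_summable hb s).tsum_eq_zero_add]
    simp
  rw [hsplit]
  unfold egf
  refine HasDerivAt.const_add (b 0) (f := fun t : ℝ => ∑' r : ℕ,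
      b (r + 1) * (t ^ (r + 1) / (Nat.factorial (r + 1) : ℝ))) ?_
  refine hasDerivAt_tsum_of_isPreconnected (t := Metric.ball (0 : ℝ) (|t| + 1)) (y₀ := t)
    (g := fun (r : ℕ) (y : ℝ) => b (r + 1) * (y ^ (r + 1) / (Nat.factorial (r + 1) : ℝ)))
    (g' := fun (r : ℕ) (y : ℝ) => b (r + 1) * (y ^ r / (Nat.factorial r : ℝ)))
    (u := fun r : ℕ => C * ((|t| + 1) ^ r / (Nat.factorial r : ℝ)))
    ((Real.summable_pow_div_factorial _).mul_left C) Metric.isOpen_ball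
    (convex_ball (0:ℝ) (|t| + 1)).isPreconnected ?_ ?_ ?_ ?_ ?_
  · intro n y _
    have h := ((hasDerivAt_pow (n + 1) y).div_const (Nat.factorial (n + 1) : ℝ)).const_mul
      (b (n + 1))
    refine h.congr_deriv ?_
    rw [Nat.factorial_succ]
    push_cast
    have : (Nat.factorial n : ℝ) ≠ 0 := by positivity
    have : (n : ℝ) + 1 ≠ 0 := by positivity
    field_simp
  · intro n y hy
    rw [norm_mul, norm_div, norm_pow, Real.norm_eq_abs, Real.norm_eq_abs, Real.norm_natCast]
    have : |y| ≤ |t| + 1 := by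
      have := mem_ball_zero_iff.1 hy
      exact this.le
    gcongr
    exact hb _
  · simp
  · exact (summable_nat_add_iff 1).2 (egf_summable hb t)
  · simp

noncomputable def bA (r : ℕ) : ℝ := (-1) ^ r / (Nat.factorial r : ℝ)
noncomputable def bH (r : ℕ) : ℝ := (-1) ^ r / (Nat.factorial (r + 1) : ℝ)
noncomputable def bG (r : ℕ) : ℝ := (-1) ^ r * te r

lemma bA_le (r : ℕ) : |bA r| ≤ 1 := by
  unfold bA
  rw [abs_div, abs_pow, abs_neg, abs_one, one_pow, Nat.abs_cast]
  exact div_le_one_of_le₀ (by exact_mod_cast Nat.factorial_pos r) (by positivity)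

lemma bH_le (r : ℕ) : |bH r| ≤ 1 := by
  unfold bH
  rw [abs_div, abs_pow, abs_neg, abs_one, one_pow, Nat.abs_cast]
  exact div_le_one_of_le₀ (by exact_mod_cast Nat.factorial_pos _) (by positivity)

lemma bG_le (r : ℕ) : |bG r| ≤ Real.exp 1 := by
  unfold bG
  rw [abs_mul, abs_pow, abs_neg, abs_one, one_pow, one_mul, abs_of_nonneg (te_nonneg r)]
  exact te_le r

lemma derivA (t : ℝ) : HasDerivAt (egf bA) (-egf bH t) t := by
  refine (egf_hasDerivAt bA_le t).congr_deriv ?_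
  symm
  unfold egf
  rw [← tsum_neg]
  congr 1; funext r
  simp only [bA, bH]
  rw [pow_succ]; ring

lemma derivG (t : ℝ) : HasDerivAt (egf bG) (-egf bG t - egf bH t) t := by
  refine (egf_hasDerivAt bG_le t).congr_deriv ?_
  symm
  unfold egf
  rw [← tsum_neg, ← (egf_summable bG_le t).neg.tsum_sub (egf_summable bH_le t)]
  congr 1; funext r
  simp only [bG, bH]
  rw [te_succ, pow_succ]; ring

lemma derivH (t : ℝ) : HasDerivAt (egf bH) (egf (fun r => bH (r + 1)) t) t :=
  egf_hasDerivAt bH_le t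

lemma relH (t : ℝ) : egf bH t + t * egf (fun r => bH (r + 1)) t = egf bA t := by
  unfold egf
  rw [(egf_summable bA_le t).tsum_eq_zero_add, (egf_summable bH_le t).tsum_eq_zero_add,
    ← tsum_mul_left, add_assoc, ← Summable.tsum_add]
  · congr 1
    · refine tsum_congr fun r => ?_
      simp only [bA, bH]
      rw [Nat.factorial_succ (r + 1), Nat.factorial_succ r]
      push_cast
      have : (Nat.factorial r : ℝ) ≠ 0 := by positivity
      have : (r : ℝ) + 1 ≠ 0 := by positivity
      have : (r : ℝ) + 1 + 1 ≠ 0 := by positivity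
      field_simp
      ring
  · exact (summable_nat_add_iff 1).2 (egf_summable bH_le t)
  · exact (egf_summable (fun r => bH_le (r + 1)) t).mul_left t

/-- `J₀(2x)`. -/
noncomputable def fa (x : ℝ) : ℝ := egf bA (x ^ 2)
/-- `2 J₁(2x)`. -/
noncomputable def fj (x : ℝ) : ℝ := 2 * x * egf bH (x ^ 2)
/-- The function of the theorem. -/
noncomputable def ff (x : ℝ) : ℝ := egf bG (x ^ 2)

lemma fa_deriv (x : ℝ) : HasDerivAt fa (-fj x) x := by
  have h := (derivA (x ^ 2)).comp x (hasDerivAt_pow 2 x)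
  refine h.congr_deriv ?_
  simp [fj]; ring

lemma fj_deriv {x : ℝ} (hx : x ≠ 0) : HasDerivAt fj (4 * fa x - fj x / x) x := by
  have h := ((hasDerivAt_id x).const_mul 2).mul
    ((derivH (x ^ 2)).comp x (hasDerivAt_pow 2 x))
  refine h.congr_deriv ?_
  have := relH (x ^ 2)
  simp only [fj, fa, ← this, id, Function.comp]
  field_simp
  push_cast
  ring

lemma ff_deriv (x : ℝ) : HasDerivAt ff (-2 * x * ff x - fj x) x := by
  have h := (derivG (x ^ 2)).comp x (hasDerivAt_pow 2 x)
  refine h.congr_deriv ?_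
  simp [fj, ff]; ring

lemma fj_bound : ∃ C : ℝ, 0 ≤ C ∧ ∀ x : ℝ, 1 ≤ x → |fj x| ≤ C * x ^ (-(1:ℝ)/2) := by
  set S : ℝ → ℝ := fun x => 4 * fa x ^ 2 + fj x ^ 2 with hS
  set Q : ℝ → ℝ := fun x => (x * (4 * fa x ^ 2 + fj x ^ 2) - fa x * fj x) * Real.exp (1 / (3 * x)) with hQ
  have hQd : ∀ x : ℝ, x ≠ 0 → HasDerivAt Q
      ((fa x * fj x / x - (x * S x - fa x * fj x) / (3 * x ^ 2)) * Real.exp (1 / (3 * x))) x := by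
    intro x hx
    have h1 := fa_deriv x
    have h2 := fj_deriv hx
    have h3 : HasDerivAt (fun x : ℝ => Real.exp (1 / (3 * x)))
        (Real.exp (1 / (3 * x)) * (-1 / (3 * x ^ 2))) x := by
      have h4 := (((hasDerivAt_id x).const_mul 3).inv (by simpa using hx)).exp
      simp only [one_div]
      refine h4.congr_deriv ?_
      simp only [id, Pi.inv_apply]
      field_simp
      try norm_num
    have h5 := (((hasDerivAt_id x).mul (((h1.pow 2).const_mul 4).add (h2.pow 2))).sub
      (h1.mul h2)).mul h3
    refine h5.congr_deriv ?_
    simp only [hS, id, Pi.add_apply, Pi.mul_apply, Pi.sub_apply, Pi.pow_apply]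
    field_simp
    push_cast
    ring
  have hanti : AntitoneOn Q (Set.Ici 1) := by
    refine antitoneOn_of_hasDerivWithinAt_nonpos (convex_Ici 1)
      (fun x hx => ((hQd x (by have : (1:ℝ) ≤ x := hx; positivity)).continuousAt).continuousWithinAt)
      (fun x hx => (hQd x ?_).hasDerivWithinAt) ?_
    · rw [interior_Ici] at hx
      have : (1:ℝ) < x := hx
      positivity
    · intro x hx
      rw [interior_Ici] at hx
      have hx : (1:ℝ) < x := hx
      have hx0 : 0 < x := by linarith
      refine mul_nonpos_of_nonpos_of_nonneg ?_ (Real.exp_pos _).le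
      rw [sub_nonpos, div_le_div_iff₀ hx0 (by positivity)]
      have hs : 4 * (fa x * fj x) ≤ S x := by
        simp only [hS]; nlinarith [sq_nonneg (2 * fa x - fj x)]
      have hs0 : 0 ≤ S x := by simp only [hS]; positivity
      nlinarith [mul_le_mul_of_nonneg_left hs (sq_nonneg x), mul_le_mul_of_nonneg_left hs hx0.le,
        mul_nonneg hs0 hx0.le, mul_nonneg (mul_nonneg hs0 hx0.le) (sub_pos.2 hx).le]
  have key : ∀ x : ℝ, 1 ≤ x → fj x ^ 2 ≤ (4 / 3 * Q 1) / x := by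
    intro x hx
    have hx0 : 0 < x := by linarith
    have h1 : Q x ≤ Q 1 := hanti (by simp) hx hx
    have hs : 4 * (fa x * fj x) ≤ S x := by
      simp only [hS]; nlinarith [sq_nonneg (2 * fa x - fj x)]
    have hs0 : 0 ≤ S x := by simp only [hS]; positivity
    have h2 : x * S x - fa x * fj x ≤ Q x := by
      have : 1 ≤ Real.exp (1 / (3 * x)) := Real.one_le_exp (by positivity)
      have h3 : 0 ≤ x * S x - fa x * fj x := by nlinarith
      exact le_mul_of_one_le_right h3 this
    have h4 : fj x ^ 2 ≤ S x := by simp only [hS]; nlinarith [sq_nonneg (fa x)]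
    rw [le_div_iff₀ hx0]
    nlinarith
  have hQ1 : 0 ≤ 4 / 3 * Q 1 := by
    have := key 1 le_rfl
    rw [div_one] at this
    exact (sq_nonneg _).trans this
  refine ⟨Real.sqrt (4 / 3 * Q 1), Real.sqrt_nonneg _, fun x hx => ?_⟩
  have hx0 : 0 < x := by linarith
  have h := Real.abs_le_sqrt (key x hx)
  rw [Real.sqrt_div hQ1] at h
  refine h.trans_eq ?_
  rw [neg_div, Real.rpow_neg hx0.le, ← Real.sqrt_eq_rpow, div_eq_mul_inv]

lemma ff_bound : ∃ A : ℝ, ∀ x : ℝ, 1 ≤ x → |ff x| ≤ A * x ^ (-(3:ℝ)/2) := by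
  obtain ⟨C, hC, hj⟩ := fj_bound
  set A : ℝ := 2 * C + |ff 1| with hA
  have hA0 : 0 ≤ A := by positivity
  have main : ∀ e : ℝ, |e| = 1 → ∀ x : ℝ, 1 ≤ x → e * ff x ≤ A * x ^ (-(3:ℝ)/2) := by
    intro e he x hx
    set P : ℝ → ℝ := fun x => (A * x ^ (-(3:ℝ)/2) - e * ff x) * Real.exp (x ^ 2) with hP
    have hPd : ∀ x : ℝ, 0 < x → HasDerivAt P
        ((A * (2 * x ^ (-(1:ℝ)/2) - 3 / 2 * x ^ (-(5:ℝ)/2)) + e * fj x) * Real.exp (x ^ 2)) x := by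
      intro x hx
      have h1 := (Real.hasDerivAt_rpow_const (x := x) (p := -(3:ℝ)/2) (Or.inl hx.ne'))
      have h2 := (hasDerivAt_pow 2 x).exp
      have h3 := ((h1.const_mul A).sub ((ff_deriv x).const_mul e)).mul h2
      refine h3.congr_deriv ?_
      have e1 : x ^ (-(3:ℝ)/2 - 1) = x ^ (-(5:ℝ)/2) := by norm_num
      have e2 : x ^ (-(1:ℝ)/2) = x ^ (-(3:ℝ)/2) * x := by
        rw [← Real.rpow_add_one hx.ne']; norm_num
      rw [e1, e2]
      simp only [Pi.sub_apply]
      push_cast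
      ring
    have hmono : MonotoneOn P (Set.Ici 1) := by
      refine monotoneOn_of_hasDerivWithinAt_nonneg (convex_Ici 1)
        (fun x hx => ((hPd x (by have : (1:ℝ) ≤ x := hx; positivity)).continuousAt).continuousWithinAt)
        (fun x hx => (hPd x ?_).hasDerivWithinAt) ?_
      · rw [interior_Ici] at hx
        have : (1:ℝ) < x := hx
        positivity
      · intro x hx
        rw [interior_Ici] at hx
        have hx : (1:ℝ) < x := hx
        have hx0 : 0 < x := by linarith
        refine mul_nonneg ?_ (Real.exp_pos _).le
        have h1 : x ^ (-(5:ℝ)/2) ≤ x ^ (-(1:ℝ)/2) :=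
          Real.rpow_le_rpow_of_exponent_le hx.le (by norm_num)
        have h2 : |e * fj x| ≤ C * x ^ (-(1:ℝ)/2) := by
          rw [abs_mul, he, one_mul]; exact hj x hx.le
        have h3 := neg_le_of_abs_le h2
        have h4 : 0 ≤ x ^ (-(1:ℝ)/2) := by positivity
        have h5 : 2 * C ≤ A := by rw [hA]; linarith [abs_nonneg (ff 1)]
        nlinarith [mul_le_mul_of_nonneg_left h1 hA0, mul_le_mul_of_nonneg_right h5 h4]
    have h1 : P 1 ≤ P x := hmono (by simp) hx hx
    have h2 : 0 ≤ P 1 := by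
      refine mul_nonneg ?_ (Real.exp_pos _).le
      have : e * ff 1 ≤ |ff 1| := by
        refine (le_abs_self _).trans ?_
        rw [abs_mul, he, one_mul]
      rw [Real.one_rpow]
      linarith
    have h3 := nonneg_of_mul_nonneg_left (h2.trans h1) (Real.exp_pos _)
    linarith
  refine ⟨A, fun x hx => ?_⟩
  rw [abs_le']
  have h1 := main 1 (by simp) x hx
  have h2 := main (-1) (by simp) x hx
  constructor <;> linarith

lemma ff_even (x : ℝ) : ff (-x) = ff x := by simp [ff]

lemma ff_cont : Continuous ff := by
  rw [continuous_iff_continuousAt]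
  exact fun x => (ff_deriv x).continuousAt

lemma ff_integrable : Integrable ff := by
  obtain ⟨A, hA⟩ := ff_bound
  have h1 : IntegrableOn ff (Set.Ioi 1) := by
    refine Integrable.mono' ((integrableOn_Ioi_rpow_of_lt (a := -(3:ℝ)/2) (by norm_num)
      zero_lt_one).const_mul A) ff_cont.aestronglyMeasurable ?_
    filter_upwards [ae_restrict_mem measurableSet_Ioi] with x hx
    exact hA x (le_of_lt hx)
  have h2 : IntegrableOn ff (Set.Iio (-1)) := by
    have := h1.comp_neg
    simpa [ff_even] using this
  have h3 : IntegrableOn ff (Set.Icc (-1) 1) := ff_cont.integrableOn_Icc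
  rw [← integrableOn_univ]
  refine ((h2.union h3).union h1).mono_set ?_
  intro x _
  simp only [Set.mem_union, Set.mem_Iio, Set.mem_Icc, Set.mem_Ioi]
  by_cases h : x < -1
  · simp [h]
  · by_cases h' : 1 < x
    · simp [h']
    · left; right; constructor <;> linarith

lemma exp_pow_int (k : ℕ) : IntegrableOn (fun s : ℝ => Real.exp (-s) * s ^ k) (Set.Ioi 0) ∧
    ∫ s in Set.Ioi (0:ℝ), Real.exp (-s) * s ^ k = (Nat.factorial k : ℝ) := by
  have h0 : (0:ℝ) < (k:ℝ) + 1 := by positivity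
  constructor
  · have h := Real.GammaIntegral_convergent h0
    simpa using h
  · rw [← Real.Gamma_nat_eq_factorial, Real.Gamma_eq_integral h0]
    simp

lemma te_int (n : ℕ) : ∫ s in Set.Ioi (0:ℝ), Real.exp (-s) * (1 + s) ^ n =
    (Nat.factorial n : ℝ) * te n := by
  have h : ∀ s : ℝ, Real.exp (-s) * (1 + s) ^ n =
      ∑ k ∈ Finset.range (n + 1), (Real.exp (-s) * s ^ k) * (n.choose k : ℝ) := by
    intro s
    rw [add_comm, add_pow, Finset.mul_sum]
    refine Finset.sum_congr rfl fun k _ => ?_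
    simp; ring
  simp_rw [h]
  rw [integral_finsetSum _ (fun k _ => (exp_pow_int k).1.mul_const _)]
  simp_rw [integral_mul_const, (exp_pow_int _).2]
  unfold te
  rw [Finset.mul_sum, ← Finset.sum_range_reflect]
  refine Finset.sum_congr rfl fun k hk => ?_
  have hk : k ≤ n := Nat.lt_succ_iff.1 (Finset.mem_range.1 hk)
  have e : n + 1 - 1 - k = n - k := by omega
  rw [e, Nat.cast_choose ℝ (Nat.sub_le n k), Nat.sub_sub_self hk]
  have : (Nat.factorial (n - k) : ℝ) ≠ 0 := by positivity
  field_simp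

lemma subst_sq (g : ℝ → ℝ) : ∫ s in Set.Ioi (0:ℝ), g s =
    ∫ ρ in Set.Ioi (1:ℝ), 2 * ρ * g (ρ ^ 2 - 1) := by
  have himg : (fun ρ : ℝ => ρ ^ 2 - 1) '' Set.Ioi 1 = Set.Ioi 0 := by
    ext y
    simp only [Set.mem_image, Set.mem_Ioi]
    constructor
    · rintro ⟨x, hx, rfl⟩; nlinarith
    · intro hy
      refine ⟨Real.sqrt (y + 1), ?_, ?_⟩
      · rw [Real.lt_sqrt zero_le_one]; linarith
      · rw [Real.sq_sqrt (by linarith)]; ring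
  rw [← himg, integral_image_eq_integral_abs_deriv_smul (f' := fun ρ => 2 * ρ) measurableSet_Ioi]
  · refine setIntegral_congr_fun measurableSet_Ioi fun x hx => ?_
    have hx : (1:ℝ) < x := hx
    simp only [smul_eq_mul]
    rw [abs_of_pos (by linarith)]
  · intro x _
    have := ((hasDerivAt_pow 2 x).sub_const 1).hasDerivWithinAt (s := Set.Ioi 1)
    refine this.congr_deriv ?_
    norm_num
  · intro x hx y hy hxy
    have hx : (1:ℝ) < x := hx
    have hy : (1:ℝ) < y := hy
    simp only at hxy
    exact (sq_eq_sq₀ (by linarith) (by linarith)).1 (by linarith)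

lemma cos_int (r : ℕ) : ∫ θ in Set.Ioo (-π) π, Real.cos θ ^ (2 * r) =
    2 * π * (Nat.factorial (2 * r) : ℝ) / (4 ^ r * (Nat.factorial r : ℝ) ^ 2) := by
  rw [← integral_Ioc_eq_integral_Ioo,
    ← intervalIntegral.integral_of_le (by linarith [Real.pi_pos])]
  induction r with
  | zero => simp; ring
  | succ r ih =>
    rw [show 2 * (r + 1) = 2 * r + 2 by ring, integral_cos_pow, ih]
    simp only [Real.sin_pi, Real.sin_neg, Nat.factorial_succ]
    have : (Nat.factorial r : ℝ) ≠ 0 := by positivity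
    have : (r : ℝ) + 1 ≠ 0 := by positivity
    have : (2 : ℝ) * r + 2 ≠ 0 := by positivity
    push_cast
    field_simp
    ring

/-- The two-dimensional Gaussian outside the unit disc. -/
noncomputable def Phi (p : ℝ × ℝ) : ℝ :=
  if 1 < p.1 ^ 2 + p.2 ^ 2 then Real.exp (-(p.1 ^ 2 + p.2 ^ 2)) else 0

lemma Phi_meas : Measurable Phi := by
  unfold Phi
  exact Measurable.ite (measurableSet_lt (by fun_prop) (by fun_prop)) (by fun_prop) (by fun_prop)

lemma Phi_nonneg (p : ℝ × ℝ) : 0 ≤ Phi p := by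
  unfold Phi; split_ifs <;> positivity

lemma Phi_le (p : ℝ × ℝ) : Phi p ≤ Real.exp (-p.1 ^ 2) * Real.exp (-p.2 ^ 2) := by
  unfold Phi
  rw [← Real.exp_add]
  split_ifs
  · exact (congrArg Real.exp (by ring)).le
  · positivity

lemma Phi_moment (r : ℕ) : ∫ p : ℝ × ℝ, Phi p * p.1 ^ (2 * r) =
    Real.exp (-1) * π * te r * (Nat.factorial (2 * r) : ℝ) / (4 ^ r * (Nat.factorial r : ℝ)) := by
  rw [← integral_comp_polarCoord_symm]
  have h1 : ∀ p ∈ polarCoord.target, p.1 • (Phi (polarCoord.symm p) *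
      (polarCoord.symm p).1 ^ (2 * r)) =
      ((Set.Ioi (1:ℝ)).indicator (fun ρ => ρ * Real.exp (-ρ ^ 2) * ρ ^ (2 * r)) p.1) *
        (Real.cos p.2 ^ (2 * r)) := by
    rintro ⟨ρ, θ⟩ hp
    rw [polarCoord_target] at hp
    have hρ : 0 < ρ := hp.1
    have e : (ρ * Real.cos θ) ^ 2 + (ρ * Real.sin θ) ^ 2 = ρ ^ 2 := by
      have := Real.sin_sq_add_cos_sq θ
      linear_combination ρ ^ 2 * this
    simp only [polarCoord_symm_apply, Phi, e, smul_eq_mul, Set.indicator, Set.mem_Ioi]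
    have h2 : 1 < ρ ^ 2 ↔ 1 < ρ := by
      constructor
      · intro h; nlinarith
      · intro h; nlinarith
    simp only [h2]
    split_ifs
    · rw [mul_pow]; ring
    · simp
  rw [setIntegral_congr_fun polarCoord.open_target.measurableSet h1, polarCoord_target,
    Measure.volume_eq_prod, setIntegral_prod_mul
      ((Set.Ioi (1:ℝ)).indicator (fun ρ : ℝ => ρ * Real.exp (-ρ ^ 2) * ρ ^ (2 * r)))
      (fun θ : ℝ => Real.cos θ ^ (2 * r)), cos_int, setIntegral_indicator measurableSet_Ioi]
  have h3 : Set.Ioi (0:ℝ) ∩ Set.Ioi 1 = Set.Ioi 1 := by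
    ext x; simp only [Set.mem_inter_iff, Set.mem_Ioi]
    constructor
    · exact fun h => h.2
    · exact fun h => ⟨by linarith, h⟩
  have h4 : ∫ ρ in Set.Ioi (1:ℝ), ρ * Real.exp (-ρ ^ 2) * ρ ^ (2 * r) =
      Real.exp (-1) / 2 * ((Nat.factorial r : ℝ) * te r) := by
    rw [← te_int, subst_sq, ← integral_const_mul]
    refine setIntegral_congr_fun measurableSet_Ioi fun x _ => ?_
    have : Real.exp (-x ^ 2) = Real.exp (-1) * Real.exp (-(x ^ 2 - 1)) := by
      rw [← Real.exp_add]; ring_nf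
    simp only [this]
    rw [pow_mul, show 1 + (x ^ 2 - 1) = x ^ 2 by ring]
    ring
  rw [h3, h4]
  have : (Nat.factorial r : ℝ) ≠ 0 := by positivity
  field_simp

lemma gauss_int {c : ℝ} (hc : 0 < c) : Integrable (fun x : ℝ => Real.exp (-c * x ^ 2)) :=
  integrable_exp_neg_mul_sq hc

lemma Phi_cosh_int (y : ℝ) : Integrable (fun p : ℝ × ℝ => Phi p * Real.cosh (2 * y * p.1)) := by
  have hb : Integrable (fun p : ℝ × ℝ => Real.exp (2 * y ^ 2) *
      (Real.exp (-(1/2) * p.1 ^ 2) * Real.exp (-1 * p.2 ^ 2))) :=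
    ((gauss_int (c := 1/2) (by norm_num)).mul_prod (gauss_int (c := 1) (by norm_num))).const_mul _
  refine hb.mono' (Phi_meas.mul (by fun_prop)).aestronglyMeasurable ?_
  filter_upwards with p
  rw [Real.norm_of_nonneg (mul_nonneg (Phi_nonneg p) (Real.cosh_pos _).le)]
  have h1 : Real.cosh (2 * y * p.1) ≤ Real.exp (p.1 ^ 2 / 2 + 2 * y ^ 2) := by
    rw [Real.cosh_eq]
    have a1 : Real.exp (2 * y * p.1) ≤ Real.exp (p.1 ^ 2 / 2 + 2 * y ^ 2) :=
      Real.exp_le_exp.2 (by nlinarith [sq_nonneg (p.1 - 2 * y)])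
    have a2 : Real.exp (-(2 * y * p.1)) ≤ Real.exp (p.1 ^ 2 / 2 + 2 * y ^ 2) :=
      Real.exp_le_exp.2 (by nlinarith [sq_nonneg (p.1 + 2 * y)])
    linarith
  refine (mul_le_mul (Phi_le p) h1 (Real.cosh_pos _).le (by positivity)).trans_eq ?_
  simp only [← Real.exp_add]
  congr 1; ring

lemma Phi_int : Integrable Phi := by
  simpa using Phi_cosh_int 0

lemma Phi_cos (x : ℝ) : ∫ p : ℝ × ℝ, Phi p * Real.cos (2 * x * p.1) =
    Real.exp (-1) * π * ff x := by
  have h := hasSum_integral_of_dominated_convergence (μ := (volume : Measure (ℝ × ℝ)))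
    (F := fun (r : ℕ) (p : ℝ × ℝ) => Phi p * ((-1) ^ r * (2 * x * p.1) ^ (2 * r) /
      (Nat.factorial (2 * r) : ℝ)))
    (f := fun p => Phi p * Real.cos (2 * x * p.1))
    (fun r p => Phi p * ((2 * x * p.1) ^ (2 * r) / (Nat.factorial (2 * r) : ℝ)))
    (fun r => (Phi_meas.mul (by fun_prop)).aestronglyMeasurable)
    (fun r => Filter.Eventually.of_forall fun p => ?_)
    (Filter.Eventually.of_forall fun p => (Real.hasSum_cosh _).summable.mul_left _)
    (by
      simp_rw [fun p : ℝ × ℝ => ((Real.hasSum_cosh (2 * x * p.1)).mul_left (Phi p)).tsum_eq]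
      exact Phi_cosh_int x)
    (Filter.Eventually.of_forall fun p => (Real.hasSum_cos _).mul_left _)
  · rw [← h.tsum_eq]
    unfold ff egf
    rw [← tsum_mul_left]
    refine tsum_congr fun r => ?_
    have e : ∀ p : ℝ × ℝ, Phi p * ((-1) ^ r * (2 * x * p.1) ^ (2 * r) /
        (Nat.factorial (2 * r) : ℝ)) = ((-1) ^ r * (2 * x) ^ (2 * r) /
        (Nat.factorial (2 * r) : ℝ)) * (Phi p * p.1 ^ (2 * r)) := by
      intro p; rw [mul_pow]; ring
    simp_rw [e]
    rw [integral_const_mul, Phi_moment]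
    unfold bG
    have : (Nat.factorial r : ℝ) ≠ 0 := by positivity
    have : (Nat.factorial (2 * r) : ℝ) ≠ 0 := by positivity
    rw [mul_pow, pow_mul 2, pow_mul x]
    norm_num
    field_simp
  · rw [norm_mul, norm_div, norm_mul, norm_pow, norm_neg, norm_one, one_pow, one_mul,
      Real.norm_of_nonneg (Phi_nonneg p), Real.norm_natCast, Real.norm_of_nonneg]
    rw [pow_mul]; positivity

/-- The projection of `Phi` to the first coordinate. -/
noncomputable def phi (w : ℝ) : ℝ := ∫ q : ℝ, Phi (w, q)

lemma phi_int : Integrable phi := Phi_int.integral_prod_left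

lemma phi_even (w : ℝ) : phi (-w) = phi w := by simp [phi, Phi]

lemma phi_cos (x : ℝ) : ∫ w : ℝ, phi w * Real.cos (2 * x * w) = Real.exp (-1) * π * ff x := by
  rw [← Phi_cos, Measure.volume_eq_prod, integral_prod]
  · refine integral_congr_ae (Filter.Eventually.of_forall fun w => ?_)
    simp only [phi]
    rw [integral_mul_const]
  · refine Phi_int.mono (Phi_meas.mul (by fun_prop)).aestronglyMeasurable ?_
    filter_upwards with p
    rw [norm_mul]
    exact mul_le_of_le_one_right (norm_nonneg _) (Real.abs_cos_le_one _)

lemma phi_sin (x : ℝ) : ∫ w : ℝ, phi w * Real.sin (2 * x * w) = 0 := by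
  have h := integral_neg_eq_self (fun w : ℝ => phi w * Real.sin (2 * x * w)) volume
  simp only [phi_even, mul_neg, Real.sin_neg, integral_neg] at h
  linarith

open FourierTransform in
lemma phi_fourier (ξ : ℝ) : 𝓕 (fun w : ℝ => (phi w : ℂ)) ξ =
    ((Real.exp (-1) * π * ff (π * ξ) : ℝ) : ℂ) := by
  rw [Real.fourier_real_eq_integral_exp_smul]
  have e : ∀ w : ℝ, Complex.exp (↑(-2 * π * w * ξ) * Complex.I) • (phi w : ℂ) =
      ((phi w * Real.cos (2 * (π * ξ) * w) : ℝ) : ℂ) -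
        ((phi w * Real.sin (2 * (π * ξ) * w) : ℝ) : ℂ) * Complex.I := by
    intro w
    rw [Complex.exp_mul_I, ← Complex.ofReal_cos, ← Complex.ofReal_sin,
      show -2 * π * w * ξ = -(2 * (π * ξ) * w) by ring, Real.cos_neg, Real.sin_neg, smul_eq_mul]
    push_cast
    ring
  have i1 : Integrable (fun w : ℝ => phi w * Real.cos (2 * (π * ξ) * w)) := by
    refine phi_int.mono (phi_int.aestronglyMeasurable.mul (by fun_prop)) ?_
    filter_upwards with p
    rw [norm_mul]
    exact mul_le_of_le_one_right (norm_nonneg _) (Real.abs_cos_le_one _)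
  have i2 : Integrable (fun w : ℝ => phi w * Real.sin (2 * (π * ξ) * w)) := by
    refine phi_int.mono (phi_int.aestronglyMeasurable.mul (by fun_prop)) ?_
    filter_upwards with p
    rw [norm_mul]
    exact mul_le_of_le_one_right (norm_nonneg _) (Real.abs_sin_le_one _)
  simp_rw [e]
  rw [integral_sub i1.ofReal (i2.ofReal.mul_const _), integral_mul_const, integral_complex_ofReal,
    integral_complex_ofReal, phi_cos, phi_sin]
  simp

lemma phi_contAt : ContinuousAt phi 0 := by
  refine continuousAt_of_dominated (bound := fun q => Real.exp (-1 * q ^ 2))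
    (Filter.Eventually.of_forall fun w =>
      (Phi_meas.comp (measurable_const.prodMk measurable_id)).aestronglyMeasurable)
    (Filter.Eventually.of_forall fun w => Filter.Eventually.of_forall fun q => ?_)
    (gauss_int one_pos) ?_
  · rw [Real.norm_of_nonneg (Phi_nonneg _)]
    refine (Phi_le _).trans ?_
    have : Real.exp (-w ^ 2) ≤ 1 := Real.exp_le_one_iff.2 (by nlinarith [sq_nonneg w])
    simp only [neg_mul, one_mul]
    exact mul_le_of_le_one_left (Real.exp_pos _).le this
  · have h1 : ∀ᵐ q : ℝ, q ≠ 1 := Measure.ae_ne volume 1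
    have h2 : ∀ᵐ q : ℝ, q ≠ -1 := Measure.ae_ne volume (-1)
    filter_upwards [h1, h2] with q hq1 hq2
    have hq : q ^ 2 ≠ 1 := by
      intro h
      rcases (sq_eq_sq_iff_eq_or_eq_neg.1 (h.trans (one_pow 2).symm)) with h | h <;> contradiction
    have hc : ContinuousAt (fun w : ℝ => w ^ 2 + q ^ 2) 0 := by fun_prop
    rcases lt_or_gt_of_ne hq with h | h
    · have hev : ∀ᶠ w : ℝ in nhds 0, w ^ 2 + q ^ 2 < 1 :=
        hc.eventually_lt continuousAt_const (by simpa using h)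
      refine (continuousAt_const (y := (0:ℝ))).congr ?_
      filter_upwards [hev] with w hw
      simp [Phi, not_lt.2 hw.le]
    · have hev : ∀ᶠ w : ℝ in nhds 0, 1 < w ^ 2 + q ^ 2 :=
        continuousAt_const.eventually_lt hc (by simpa using h)
      have : ContinuousAt (fun w : ℝ => Real.exp (-(w ^ 2 + q ^ 2))) 0 := by fun_prop
      refine this.congr ?_
      filter_upwards [hev] with w hw
      simp [Phi, hw]

lemma phi_zero : phi 0 = Real.exp (-1) *
    ∫ s in Set.Ioi (0:ℝ), Real.exp (-s) * (1 + s) ^ (-(1:ℝ)/2) := by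
  have h1 : phi 0 = ∫ q : ℝ, (fun y : ℝ => (Set.Ioi (1:ℝ)).indicator
      (fun y => Real.exp (-y ^ 2)) y) |q| := by
    unfold phi Phi
    refine integral_congr_ae (Filter.Eventually.of_forall fun q => ?_)
    simp [Set.indicator]
  have h3 : Set.Ioi (0:ℝ) ∩ Set.Ioi 1 = Set.Ioi 1 := by
    ext x; simp only [Set.mem_inter_iff, Set.mem_Ioi]
    constructor
    · exact fun h => h.2
    · exact fun h => ⟨by linarith, h⟩
  rw [h1, integral_comp_abs, setIntegral_indicator measurableSet_Ioi, h3, subst_sq,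
    ← integral_const_mul, ← integral_const_mul]
  refine setIntegral_congr_fun measurableSet_Ioi fun x hx => ?_
  have hx0 : (0:ℝ) < x := zero_lt_one.trans hx
  have : Real.exp (-x ^ 2) = Real.exp (-1) * Real.exp (-(x ^ 2 - 1)) := by
    rw [← Real.exp_add]; ring_nf
  have e2 : (1 + (x ^ 2 - 1)) ^ (-(1:ℝ)/2) = x⁻¹ := by
    rw [show 1 + (x ^ 2 - 1) = x ^ 2 by ring, neg_div, Real.rpow_neg (by positivity),
      ← Real.sqrt_eq_rpow, Real.sqrt_sq hx0.le]
  simp only [this, e2]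
  field_simp

open FourierTransform in
lemma ff_integral : ∫ x : ℝ, ff x =
    ∫ s in Set.Ioi (0:ℝ), Real.exp (-s) * (1 + s) ^ (-(1:ℝ)/2) := by
  have hF : 𝓕 (fun w : ℝ => (phi w : ℂ)) = fun ξ : ℝ =>
      ((Real.exp (-1) * π * ff (π * ξ) : ℝ) : ℂ) := funext phi_fourier
  have hi : Integrable (fun ξ : ℝ => Real.exp (-1) * π * ff (π * ξ)) :=
    (ff_integrable.comp_mul_left' Real.pi_ne_zero).const_mul _
  have h := MeasureTheory.Integrable.fourierInv_fourier_eq (f := fun w : ℝ => (phi w : ℂ))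
    phi_int.ofReal (by rw [hF]; exact hi.ofReal) (v := 0)
    (Complex.continuous_ofReal.continuousAt.comp phi_contAt)
  rw [hF, Real.fourierInv_eq'] at h
  simp only [inner_zero_right, mul_zero, Complex.ofReal_zero, zero_mul, Complex.exp_zero,
    one_smul] at h
  rw [integral_complex_ofReal, Complex.ofReal_inj, integral_const_mul,
    Measure.integral_comp_mul_left, phi_zero, abs_of_pos (by positivity), smul_eq_mul] at h
  have hp := Real.pi_pos
  have he := Real.exp_pos (-1)
  field_simp at h
  rw [h, neg_div]

lemma ff_eq (x : ℝ) : ∑' r : ℕ, (-1 : ℝ) ^ r * te r / (Nat.factorial r : ℝ) * x ^ (2 * r) = ff x := by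
  unfold ff egf bG
  refine tsum_congr fun r => ?_
  rw [pow_mul]; ring

/-- `e_n = (1/n!) ∫_0^∞ e^{-s}(1+s)^n ds`; moreover
`∫_{-∞}^{∞} ∑_{r=0}^∞ (-1)^r (e_r/r!) x^{2r} dx = ∫_0^∞ e^{-s}(1+s)^{-1/2} ds`,
the series under the integral converging for every real `x` to an integrable function. -/
theorem te_integral_repr :
    (∀ n : ℕ, te n =
      (1 / (Nat.factorial n : ℝ)) * ∫ s in Set.Ioi (0:ℝ), Real.exp (-s) * (1 + s) ^ n) ∧
    (∀ x : ℝ, Summable (fun r : ℕ => (-1 : ℝ) ^ r * te r / (Nat.factorial r : ℝ) * x ^ (2 * r))) ∧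
    Integrable (fun x : ℝ => ∑' r : ℕ, (-1 : ℝ) ^ r * te r / (Nat.factorial r : ℝ) * x ^ (2 * r)) ∧
    (∫ x : ℝ, ∑' r : ℕ, (-1 : ℝ) ^ r * te r / (Nat.factorial r : ℝ) * x ^ (2 * r)) =
      ∫ s in Set.Ioi (0:ℝ), Real.exp (-s) * (1 + s) ^ (-(1:ℝ)/2) := by
  refine ⟨fun n => ?_, fun x => ?_, ?_, ?_⟩
  · rw [te_int]
    have : (Nat.factorial n : ℝ) ≠ 0 := by positivity
    field_simp
  · refine (egf_summable bG_le (x ^ 2)).congr fun r => ?_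
    unfold bG
    rw [pow_mul]; ring
  · simp_rw [ff_eq]
    exact ff_integrable
  · simp_rw [ff_eq]
    exact ff_integral
end
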